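/- arXiv:2602.24274 — 4 statements merged into one kernel-verified Lean document; each statement's English description precedes it below -/
import Mathlib

section
/- Let (B, A) be a 3-colored digraph where B is a connected bicyclic graph of θ-type such that exactly one cycle of B has weight in {1, −1} and the other two cycles have weight in {i, −i}. Then det A ≠ 0 if and only if one of the following holds: (1) B has a unique perfect matching; (2) B has more than one perfect matching and either (i) B has more than one independent cycle, or (ii) B has exactly one independent cycle Γ and one of the following holds: w(Γ) = 1 and |Γ| ≡ 2 (mod 4); w(Γ) = −1 and |Γ| ≡ 0 (mod 4); w(Γ) ∈ {i, −i}; (3) B has no perfect matching and B contains an independent cycle Γ with |Γ| odd and w(Γ) ∈ {1, −1}. -/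
/-!
The determinant of `A` is expanded by the Leibniz formula. A permutation contributes only if it moves
every vertex along an edge of `B`. In a bicyclic graph of θ-type any two cycles share a vertex
(`cycles_meet`), so such a permutation is either a perfect matching, read as a fixed-point-free
involution, or a product `π * ρ` of one directed cycle `π` of `B` and a perfect matching `ρ` of the
complement of that cycle (`minv_or_cycle`); moreover `ρ` is determined by `π` (`Comp.unique`).

A perfect matching contributes `(-1) ^ (n / 2)`, and `π * ρ` contributes
`sign π * sign ρ * w(π)`. As `A` is Hermitian, the determinant is real, so only real parts matter
and all cycles of weight `±i` drop out. With `m` the number of perfect matchings and `π₁` the cycle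
of weight `±1`, this gives `det A = (-1) ^ (n / 2) * m`, plus `2 * sign π₁ * sign ρ * w(π₁)` if `π₁`
is independent (`OneReal.re_det_of_not_indep`, `OneReal.re_det_of_indep`).

What remains is a case distinction on `m`. The determinant can vanish only for `m = 0` and `m = 2`.
Two distinct perfect matchings differ along exactly one cycle, which is independent
(`exists_near_of_ne`), and conversely an even independent cycle yields two perfect matchings
differing along it (`exists_near_of_even`). Hence for `m = 0` an independent cycle is odd, for
`m = 2` there is exactly one independent cycle, and for `m ≥ 3` there are at least two. For `m = 2`
with `π₁` independent of length `k`, the determinant is `±2 * ((-1) ^ (k / 2) - w(π₁))`.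

Cycles of `B`, given as closed walks, are represented by cyclic permutations through `Traverses`, and
perfect matchings, given as edge sets, by involutions through `pmOf`.
-/

open SimpleGraph

/-- A perfect matching of a simple graph, given as a finite set of edges in which
every vertex lies in exactly one edge. -/
def IsPM {V : Type*} [DecidableEq V] (G : SimpleGraph V) (M : Finset (Sym2 V)) : Prop :=
  (∀ e ∈ M, e ∈ G.edgeSet) ∧ ∀ v : V, (M.filter (fun e => v ∈ e)).card = 1

/-- `G` has a perfect matching. -/
def HasPM {V : Type*} [DecidableEq V] (G : SimpleGraph V) : Prop :=
  ∃ M, IsPM G M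

/-- `(G, A)` is a 3-colored digraph: `A` is Hermitian with zero diagonal, entries in
`{1, -1, i, -i}` on edges of `G`, and `0` on non-edges. -/
def ThreeColored {V : Type*} (G : SimpleGraph V) (A : Matrix V V ℂ) : Prop :=
  A.IsHermitian ∧ (∀ v, A v v = 0) ∧
    (∀ u v, G.Adj u v → A u v ∈ ({1, -1, Complex.I, -Complex.I} : Set ℂ)) ∧
    (∀ u v, u ≠ v → ¬ G.Adj u v → A u v = 0)

/-- The weight of a walk: the product of the entries of `A` along its darts. -/
def walkWeight {V : Type*} {G : SimpleGraph V} (A : Matrix V V ℂ) {u v : V}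
    (p : G.Walk u v) : ℂ :=
  (p.darts.map (fun d => A d.toProd.1 d.toProd.2)).prod

/-- A closed walk (e.g. a cycle) `c` is independent in `G` if `G - V(c)` has a
perfect matching. -/
def IsIndep {V : Type*} [DecidableEq V] (G : SimpleGraph V) {u : V} (c : G.Walk u u) : Prop :=
  HasPM (G.induce {x : V | x ∉ c.support})

/-- The number of perfect matchings of `G`. -/
noncomputable def numPM (V : Type*) [DecidableEq V] (G : SimpleGraph V) : ℕ :=
  {M : Finset (Sym2 V) | IsPM G M}.ncard

/-- A connected graph on `n` vertices is unicyclic if it has exactly `n` edges. -/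
def Unicyclic (V : Type*) [Fintype V] (G : SimpleGraph V) : Prop :=
  G.Connected ∧ G.edgeSet.ncard = Fintype.card V

/-- A connected graph on `n` vertices is bicyclic if it has exactly `n + 1` edges. -/
def Bicyclic (V : Type*) [Fintype V] (G : SimpleGraph V) : Prop :=
  G.Connected ∧ G.edgeSet.ncard = Fintype.card V + 1

/-- Two cycles are regarded as the same cycle when they have the same edge set. -/
def SameCycle {V : Type*} [DecidableEq V] {G : SimpleGraph V} {u v : V}
    (c : G.Walk u u) (d : G.Walk v v) : Prop :=
  c.edges.toFinset = d.edges.toFinset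

/-- A bicyclic graph is of ∞-type if its cycles are pairwise edge-disjoint. -/
def InfinityType {V : Type*} [DecidableEq V] (G : SimpleGraph V) : Prop :=
  ∀ (u v : V) (c : G.Walk u u) (d : G.Walk v v), c.IsCycle → d.IsCycle →
    ¬ SameCycle c d → ∀ e ∈ c.edges, e ∉ d.edges

/-- A bicyclic graph is of θ-type if it is not of ∞-type. -/
def ThetaType {V : Type*} [DecidableEq V] (G : SimpleGraph V) : Prop :=
  ¬ InfinityType G

/-- `e` is a peg on the cycle `c`: either a chord of `c`, or an edge joining a vertex
of `c` to a vertex outside `c`. -/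
def IsPeg {V : Type*} {G : SimpleGraph V} {u : V} (c : G.Walk u u) (e : Sym2 V) : Prop :=
  ∃ x y, e = s(x, y) ∧
    ((x ∈ c.support ∧ y ∈ c.support ∧ e ∉ c.edges) ∨ (x ∈ c.support ∧ y ∉ c.support))

/-- The number of pegs on the cycle `c` relative to the perfect matching `M`. -/
noncomputable def pegCount {V : Type*} {G : SimpleGraph V} {u : V} (c : G.Walk u u)
    (M : Finset (Sym2 V)) : ℕ :=
  {e : Sym2 V | e ∈ M ∧ IsPeg c e}.ncard

/-- A path is mm-alternating relative to `M` if its edges alternately belong to `M`,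
beginning and ending with edges of `M`. -/
def MMAlt {V : Type*} {G : SimpleGraph V} (M : Finset (Sym2 V)) {a b : V}
    (p : G.Walk a b) : Prop :=
  p.IsPath ∧ Odd p.length ∧
    ∀ (k : ℕ) (h : k < p.edges.length), (p.edges.get ⟨k, h⟩ ∈ M ↔ Even k)

/-! ### Any two cycles of a θ-type bicyclic graph meet -/

section Theta
variable {V : Type*} {B : SimpleGraph V}

theorem exists_edge_of_isCycle {u : V} {c : B.Walk u u} (hc : c.IsCycle) : ∃ e, e ∈ c.edges := by
  cases c with
  | nil => exact absurd rfl hc.ne_nil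
  | cons h p => exact ⟨_, List.mem_cons_self⟩

/-- A walk none of whose edges leaves `S` stays on the side of `S` on which it starts. -/
theorem mem_iff_of_walk_closed (S : Set V) {u v : V} (p : B.Walk u v)
    (h : ∀ x y, s(x, y) ∈ p.edges → (x ∈ S ↔ y ∈ S)) : ∀ z ∈ p.support, (z ∈ S ↔ u ∈ S) := by
  induction p with
  | nil => intro z hz; simp at hz; simp [hz]
  | cons hadj p ih =>
    intro z hz
    simp only [Walk.support_cons, List.mem_cons] at hz
    rcases hz with rfl | hz
    · rfl
    · rw [ih (fun x y hxy => h x y (by simp [hxy])) z hz]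
      exact (h _ _ (by simp)).symm

theorem connected_deleteEdges_of_isCycle (hB : B.Connected) {u : V} {c : B.Walk u u}
    (hc : c.IsCycle) {e : Sym2 V} (he : e ∈ c.edges) : (B.deleteEdges {e}).Connected := by
  induction e with
  | h x y =>
    apply hB.connected_delete_edge_of_not_isBridge
    rw [isBridge_iff_forall_cycle_notMem (Walk.edges_subset_edgeSet c he)]
    intro h
    exact h c hc he

/-- Deleting from a bicyclic graph an edge of `c` outside `d` and an edge of `d` leaves a tree, so
every cycle uses one of the two edges. -/
theorem cycle_uses_edge [Fintype V] (hB : Bicyclic V B) {u v : V} {c : B.Walk u u}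
    {d : B.Walk v v} (hc : c.IsCycle) (hd : d.IsCycle) {e f : Sym2 V} (he : e ∈ c.edges)
    (hed : e ∉ d.edges) (hf : f ∈ d.edges) {w : V} {g : B.Walk w w} (hg : g.IsCycle) :
    e ∈ g.edges ∨ f ∈ g.edges := by
  by_contra hcon
  push Not at hcon
  obtain ⟨h1, h2⟩ := hcon
  have hc1 : (B.deleteEdges {e}).Connected := connected_deleteEdges_of_isCycle hB.1 hc he
  have hdd : ∀ e' ∈ d.edges, e' ∉ ({e} : Set (Sym2 V)) := by
    rintro e' he' rfl; exact hed he'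
  have hd1 : (d.toDeleteEdges {e} hdd).IsCycle := hd.transfer _
  have hf1 : f ∈ (d.toDeleteEdges {e} hdd).edges := by
    simpa [Walk.toDeleteEdges] using hf
  have hc2 := connected_deleteEdges_of_isCycle hc1 hd1 hf1
  have hef : f ≠ e := by rintro rfl; exact hed hf
  have htree : ((B.deleteEdges {e}).deleteEdges {f}).IsTree := by
    rw [isTree_iff_connected_and_card]
    refine ⟨hc2, ?_⟩
    rw [deleteEdges_deleteEdges, Nat.card_coe_set_eq, edgeSet_deleteEdges, Set.ncard_sdiff]
    · rw [hB.2, Set.union_singleton, Set.ncard_pair hef, Nat.card_eq_fintype_card]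
      have : 0 < Fintype.card V := Fintype.card_pos_iff.2 ⟨u⟩
      omega
    · rintro x (rfl | rfl)
      · exact Walk.edges_subset_edgeSet c he
      · exact Walk.edges_subset_edgeSet d hf
  have hgg : ∀ e' ∈ g.edges, e' ∈ ((B.deleteEdges {e}).deleteEdges {f}).edgeSet := by
    intro e' he'
    rw [deleteEdges_deleteEdges, edgeSet_deleteEdges]
    refine ⟨Walk.edges_subset_edgeSet g he', ?_⟩
    rintro (rfl | rfl)
    · exact h1 he'
    · exact h2 he'
  exact htree.2 _ (hg.transfer hgg)

theorem edge_mem_support {u v : V} {p : B.Walk u v} {e : Sym2 V} (he : e ∈ p.edges) {z : V}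
    (hz : z ∈ e) : z ∈ p.support := by
  induction e with
  | h x y =>
    rcases Sym2.mem_iff.1 hz with rfl | rfl
    · exact Walk.fst_mem_support_of_mem_edges p he
    · exact Walk.snd_mem_support_of_mem_edges p he

/-- In a bicyclic graph with two disjoint cycles, every cycle containing the first one
coincides with it. -/
theorem cycle_eq_of_subset [Fintype V] (hB : Bicyclic V B) {u v : V} {c : B.Walk u u}
    {d : B.Walk v v} (hc : c.IsCycle) (hdis : ∀ z ∈ c.support, z ∉ d.support)
    (hd : d.IsCycle) {w : V} {g : B.Walk w w}
    (hg : g.IsCycle) (hsub : ∀ e ∈ c.edges, e ∈ g.edges) : ∀ e ∈ g.edges, e ∈ c.edges := by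
  intro e he
  by_contra hec
  have hcd : ∀ e' ∈ c.edges, e' ∉ d.edges := by
    intro e' h1 h2
    induction e' with
    | h x y => exact hdis x (edge_mem_support h1 (by simp)) (edge_mem_support h2 (by simp))
  obtain ⟨f, hf⟩ := exists_edge_of_isCycle hc
  have key : ∀ e' ∈ g.edges, e' ∉ c.edges → e' ∈ d.edges := by
    intro e' he' hec'
    exact (cycle_uses_edge hB hg hc he' hec' hf hd).resolve_right (hcd f hf)
  have hcl := mem_iff_of_walk_closed {z | z ∈ c.support} g (by
    intro x y hxy
    by_cases h : s(x, y) ∈ c.edges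
    · exact iff_of_true (edge_mem_support h (by simp)) (edge_mem_support h (by simp))
    · have h' := key _ hxy h
      refine iff_of_false (fun h'' => hdis _ h'' (edge_mem_support h' (by simp)))
        (fun h'' => hdis _ h'' (edge_mem_support h' (by simp))))
  induction e with
  | h x y =>
  induction f with
  | h x' y' =>
    have h1 := hcl x' (edge_mem_support (hsub _ hf) (by simp))
    have h2 := hcl x (edge_mem_support he (by simp))
    have h3 : x' ∈ c.support := edge_mem_support hf (by simp)
    have h4 : x ∉ c.support := fun h => hdis _ h (edge_mem_support (key _ he hec) (by simp))
    simp only [Set.mem_ofPred_eq] at h1 h2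
    tauto

theorem cycles_meet [Fintype V] [DecidableEq V] (hB : Bicyclic V B) (hθ : ThetaType B) {u v : V}
    {c : B.Walk u u} {d : B.Walk v v} (hc : c.IsCycle) (hd : d.IsCycle) :
    ∃ z ∈ c.support, z ∈ d.support := by
  by_contra hcon
  push Not at hcon
  have hcon' : ∀ z ∈ d.support, z ∉ c.support := fun z h1 h2 => hcon z h2 h1
  have hcd : ∀ e' ∈ c.edges, e' ∉ d.edges := by
    intro e' h1 h2
    induction e' with
    | h x y => exact hcon x (edge_mem_support h1 (by simp)) (edge_mem_support h2 (by simp))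
  -- the only cycles of `B` are `c` and `d`
  have key : ∀ (w : V) (g : B.Walk w w), g.IsCycle →
      (∀ e, e ∈ g.edges ↔ e ∈ c.edges) ∨ (∀ e, e ∈ g.edges ↔ e ∈ d.edges) := by
    intro w g hg
    by_cases h1 : ∀ e ∈ c.edges, e ∈ g.edges
    · exact Or.inl fun e => ⟨cycle_eq_of_subset hB hc hcon hd hg h1 e, h1 e⟩
    by_cases h2 : ∀ e ∈ d.edges, e ∈ g.edges
    · exact Or.inr fun e => ⟨cycle_eq_of_subset hB hd hcon' hc hg h2 e, h2 e⟩
    push Not at h1 h2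
    obtain ⟨e, he, heg⟩ := h1
    obtain ⟨f, hf, hfg⟩ := h2
    have := cycle_uses_edge hB hc hd he (hcd e he) hf hg
    tauto
  apply hθ
  intro a b g h hg hh hne e he he'
  apply hne
  simp only [SameCycle, Finset.ext_iff, List.mem_toFinset]
  rcases key a g hg with h1 | h1 <;> rcases key b h hh with h2 | h2
  · intro e; rw [h1, h2]
  · exact absurd ((h2 e).1 he') (hcd e ((h1 e).1 he))
  · exact absurd ((h1 e).1 he) (hcd e ((h2 e).1 he'))
  · intro e; rw [h1, h2]

end Theta

/-! ### Cycles of a graph as cyclic permutations -/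

theorem perm_apply_inv {V : Type*} (π : Equiv.Perm V) (z : V) : π (π⁻¹ z) = z :=
  π.apply_symm_apply z

theorem perm_inv_apply {V : Type*} (π : Equiv.Perm V) (z : V) : π⁻¹ (π z) = z :=
  π.symm_apply_apply z

section CyclePerm
variable {V : Type*} [Fintype V] [DecidableEq V] {B : SimpleGraph V}

/-- A cycle of `B` with a direction of traversal, encoded as the cyclic permutation of length at
least three sending each vertex of the cycle to the next one and fixing the other vertices. -/
structure GCycle (B : SimpleGraph V) (π : Equiv.Perm V) : Prop where
  isCycle : π.IsCycle
  three_le : 3 ≤ π.support.card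
  adj : ∀ z ∈ π.support, B.Adj z (π z)

/-- The closed walk `c` traverses its vertices in the order given by the permutation `π`. -/
structure Traverses {u : V} (c : B.Walk u u) (π : Equiv.Perm V) : Prop where
  walk : c.IsCycle
  perm : GCycle B π
  step : ∀ k < c.length, π (c.getVert k) = c.getVert (k + 1)
  supp : ∀ z, z ∈ π.support ↔ z ∈ c.support

theorem Traverses.exists_getVert {u : V} {c : B.Walk u u} {π : Equiv.Perm V} (h : Traverses c π) {z : V}
    (hz : z ∈ π.support) : ∃ k < c.length, c.getVert k = z := by
  rw [h.supp, Walk.mem_support_iff_exists_getVert] at hz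
  obtain ⟨k, hk, hkl⟩ := hz
  have h3 := h.walk.three_le_length
  rcases hkl.eq_or_lt with rfl | hlt
  · exact ⟨0, by omega, by simpa using hk⟩
  · exact ⟨k, hlt, hk⟩

theorem Traverses.mem_edges {u : V} {c : B.Walk u u} {π : Equiv.Perm V} (h : Traverses c π) (e : Sym2 V) :
    e ∈ c.edges ↔ ∃ z ∈ π.support, e = s(z, π z) := by
  constructor
  · intro he
    obtain ⟨k, hk, rfl⟩ := List.getElem_of_mem he
    have hk' : k < c.length := by simpa using hk
    refine ⟨c.getVert k, (h.supp _).2 (Walk.getVert_mem_support _ _), ?_⟩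
    rw [Walk.getElem_edges, h.step k hk']
  · rintro ⟨z, hz, rfl⟩
    obtain ⟨k, hk, rfl⟩ := h.exists_getVert hz
    rw [h.step k hk]
    have hk' : k < c.edges.length := by simpa using hk
    rw [← Walk.getElem_edges hk']
    exact List.getElem_mem _

theorem Traverses.injOn {u : V} {c : B.Walk u u} {π : Equiv.Perm V} (h : Traverses c π) :
    Set.InjOn c.getVert (Finset.range c.length : Set ℕ) := by
  intro i hi j hj hij
  simp only [Finset.coe_range, Set.mem_Iio] at hi hj
  exact h.walk.getVert_injOn' (by simp only [Set.mem_ofPred_eq]; omega)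
    (by simp only [Set.mem_ofPred_eq]; omega) hij

theorem Traverses.image {u : V} {c : B.Walk u u} {π : Equiv.Perm V} (h : Traverses c π) :
    (Finset.range c.length).image c.getVert = π.support := by
  ext z
  simp only [Finset.mem_image, Finset.mem_range]
  refine ⟨?_, fun hz => h.exists_getVert hz⟩
  rintro ⟨k, hk, rfl⟩
  exact (h.supp _).2 (Walk.getVert_mem_support _ _)

theorem Traverses.length {u : V} {c : B.Walk u u} {π : Equiv.Perm V} (h : Traverses c π) :
    c.length = π.support.card := by
  rw [← h.image, Finset.card_image_of_injOn h.injOn, Finset.card_range]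

theorem Traverses.weight {u : V} {c : B.Walk u u} {π : Equiv.Perm V} (h : Traverses c π)
    (A : Matrix V V ℂ) : walkWeight A c = ∏ z ∈ π.support, A z (π z) := by
  rw [← h.image, Finset.prod_image h.injOn, walkWeight, ← Fin.prod_univ_getElem,
    Finset.prod_range]
  refine Fintype.prod_equiv (finCongr (by simp)) _ _ ?_
  intro i
  have hi : (i : ℕ) < c.length := by simpa using i.2
  simp [Walk.darts_getElem_eq_getVert, h.step _ hi]

theorem exists_rep_of_walk {u : V} {c : B.Walk u u} (hc : c.IsCycle) : ∃ π, Traverses c π := by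
  have h3 := hc.three_le_length
  have hnd : c.support.tail.Nodup := hc.support_nodup
  have hlen : c.support.tail.length = c.length := by simp
  have hget : ∀ k (hk : k < c.support.tail.length), c.support.tail[k] = c.getVert (k + 1) := by
    intro k hk
    rw [List.getElem_tail, Walk.support_getElem_eq_getVert]
  have hsupp : ∀ z, z ∈ c.support.tail ↔ z ∈ c.support := by
    intro z
    refine ⟨List.mem_of_mem_tail, fun hz => ?_⟩
    rw [← Walk.cons_tail_support, List.mem_cons] at hz
    rcases hz with rfl | hz
    · have := hget (c.length - 1) (by omega)
      rw [Nat.sub_add_cancel (by omega), Walk.getVert_length] at this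
      exact List.mem_of_getElem this
    · exact hz
  have hstep : ∀ k < c.length, c.support.tail.formPerm (c.getVert k) = c.getVert (k + 1) := by
    intro k hk
    rcases k with _ | k
    · have h1 := hget (c.length - 1) (by omega)
      rw [Nat.sub_add_cancel (by omega), Walk.getVert_length] at h1
      have h2 := List.formPerm_apply_getElem _ hnd (c.length - 1) (by omega)
      rw [h1, hget] at h2
      rw [Walk.getVert_zero, h2, Nat.sub_add_cancel (by omega), hlen, Nat.mod_self]
    · have h2 := List.formPerm_apply_getElem _ hnd k (by omega)
      rw [hget, hget] at h2
      rw [h2, Nat.mod_eq_of_lt (by omega)]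
  have hs : c.support.tail.formPerm.support = c.support.tail.toFinset := by
    apply List.support_formPerm_of_nodup _ hnd
    intro x hx
    rw [hx] at hlen
    simp at hlen
    omega
  have hs' : ∀ z, z ∈ c.support.tail.formPerm.support ↔ z ∈ c.support := by
    intro z
    rw [hs, List.mem_toFinset, hsupp]
  refine ⟨c.support.tail.formPerm, hc, ⟨List.isCycle_formPerm hnd (by omega), ?_, ?_⟩, hstep, hs'⟩
  · rw [hs, List.toFinset_card_of_nodup hnd]; omega
  · intro z hz
    rw [hs, List.mem_toFinset] at hz
    obtain ⟨k, hk, rfl⟩ := List.getElem_of_mem hz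
    rw [List.formPerm_apply_getElem _ hnd, hget, hget]
    rcases Nat.lt_or_ge (k + 1) c.length with hlt | hge
    · rw [Nat.mod_eq_of_lt (by omega)]
      exact c.adj_getVert_succ hlt
    · have hk1 : k + 1 = c.length := by omega
      rw [hlen, hk1, Nat.mod_self, Walk.getVert_length]
      have := c.adj_getVert_succ (i := 0) (by omega)
      rwa [Walk.getVert_zero] at this

theorem exists_orbit_walk {π : Equiv.Perm V} (hadj : ∀ z ∈ π.support, B.Adj z (π z)) (n : ℕ) :
    ∀ x ∈ π.support, ∀ y, (π ^ n) x = y →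
      ∃ p : B.Walk x y, p.length = n ∧ ∀ k ≤ n, p.getVert k = (π ^ k) x := by
  induction n with
  | zero =>
    intro x _ y hy
    simp only [pow_zero, Equiv.Perm.coe_one, id_eq] at hy
    subst hy
    exact ⟨Walk.nil, rfl, fun k hk => by simp [Nat.le_zero.1 hk]⟩
  | succ n ih =>
    intro x hx y hy
    obtain ⟨p, hp, hk⟩ := ih (π x) (Equiv.Perm.apply_mem_support.2 hx) y
      (by rw [← hy, pow_succ, Equiv.Perm.mul_apply])
    refine ⟨Walk.cons (hadj x hx) p, by simp [hp], ?_⟩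
    rintro (_ | k) hkn
    · simp
    · rw [Walk.getVert_cons_succ, hk k (by omega), pow_succ, Equiv.Perm.mul_apply]

theorem exists_rep_of_perm {π : Equiv.Perm V} (hπ : GCycle B π) :
    ∃ (u : V) (c : B.Walk u u), Traverses c π := by
  obtain ⟨x, hx⟩ : ∃ x, x ∈ π.support := by
    apply Finset.card_pos.1; have := hπ.three_le; omega
  have h3 := hπ.three_le
  have hord := hπ.isCycle.orderOf
  obtain ⟨n, hn⟩ : ∃ n, π.support.card = n + 1 := ⟨π.support.card - 1, by omega⟩
  have hinj : ∀ i j, i < n + 1 → j < n + 1 → (π ^ i) x = (π ^ j) x → i = j := by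
    have aux : ∀ i j, i ≤ j → j < n + 1 → (π ^ i) x = (π ^ j) x → i = j := by
      intro i j hij hj h
      have h1 : (π ^ (j - i)) x = x := by
        apply (π ^ i).injective
        rw [← Equiv.Perm.mul_apply, ← pow_add, Nat.add_sub_cancel' hij, h]
      rw [← hπ.isCycle.pow_eq_one_iff' (Equiv.Perm.mem_support.1 hx)] at h1
      have h2 := orderOf_dvd_of_pow_eq_one h1
      have h3 := Nat.eq_zero_of_dvd_of_lt h2 (by omega)
      omega
    intro i j hi hj h
    rcases le_total i j with hij | hij
    · exact aux i j hij hj h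
    · exact (aux j i hij hi h.symm).symm
  have hx1 : (π ^ (n + 1)) x = x := by rw [← hn, ← hord, pow_orderOf_eq_one]; rfl
  have hx2 : (π ^ n) (π x) = x := by rwa [pow_succ, Equiv.Perm.mul_apply] at hx1
  obtain ⟨p, hp, hpk⟩ := exists_orbit_walk hπ.adj n (π x) (Equiv.Perm.apply_mem_support.2 hx) x hx2
  have hpk' : ∀ k ≤ n, p.getVert k = (π ^ (k + 1)) x := by
    intro k hk
    rw [hpk k hk, pow_succ, Equiv.Perm.mul_apply]
  have hpath : p.IsPath := by
    rw [← Walk.IsPath.getVert_injOn_iff]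
    intro i hi j hj hij
    simp only [Set.mem_ofPred_eq, hp] at hi hj
    rw [hpk i hi, hpk j hj] at hij
    have h' : (π ^ i) x = (π ^ j) x := by
      apply π.injective
      rwa [← Equiv.Perm.mul_apply, ← Equiv.Perm.mul_apply, ← pow_succ', ← pow_succ', pow_succ,
        pow_succ]
    exact hinj i j (by omega) (by omega) h'
  have hcyc : (Walk.cons (hπ.adj x hx) p).IsCycle := by
    rw [Walk.cons_isCycle_iff]
    refine ⟨hpath, fun he => ?_⟩
    obtain ⟨k, hk, hke⟩ := List.getElem_of_mem he
    have hk' : k < n := by simpa [hp] using hk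
    rw [Walk.getElem_edges, hpk' k (by omega), hpk' (k + 1) (by omega)] at hke
    rcases Sym2.eq_iff.1 hke with ⟨h1, -⟩ | ⟨h1, h2⟩
    · have := hinj (k + 1) 0 (by omega) (by omega) (by simpa using h1)
      omega
    · have h1' := hinj (k + 1) 1 (by omega) (by omega) (by simpa using h1)
      have h2' : (π ^ 2) x = x := by
        have : k = 0 := by omega
        simpa [this] using h2
      have := hinj 2 0 (by omega) (by omega) (by simpa using h2')
      omega
  have hgv : ∀ k ≤ n + 1, (Walk.cons (hπ.adj x hx) p).getVert k = (π ^ k) x := by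
    rintro (_ | k) hk
    · simp
    · rw [Walk.getVert_cons_succ, hpk' k (by omega)]
  have hl : (Walk.cons (hπ.adj x hx) p).length = n + 1 := by simp [hp]
  refine ⟨x, Walk.cons (hπ.adj x hx) p, hcyc, hπ, ?_, ?_⟩
  · intro k hk
    rw [hgv k (by omega), hgv (k + 1) (by omega), pow_succ', Equiv.Perm.mul_apply]
  · intro z
    rw [Walk.mem_support_iff_exists_getVert]
    constructor
    · intro hz
      obtain ⟨i, hi, h⟩ := (hπ.isCycle.sameCycle (Equiv.Perm.mem_support.1 hx)
        (Equiv.Perm.mem_support.1 hz)).exists_pow_eq'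
      refine ⟨i, ?_, by omega⟩
      rw [hgv i (by omega), h]
    · rintro ⟨k, rfl, hk⟩
      rw [hgv k (by omega)]
      exact Equiv.Perm.pow_apply_mem_support.2 hx

theorem GCycle.inv {π : Equiv.Perm V} (hπ : GCycle B π) : GCycle B π⁻¹ := by
  refine ⟨hπ.isCycle.inv, by rw [Equiv.Perm.support_inv]; exact hπ.three_le, ?_⟩
  intro z hz
  rw [Equiv.Perm.support_inv] at hz
  have : π⁻¹ z ∈ π.support := by rwa [← Equiv.Perm.apply_mem_support, perm_apply_inv]
  have := hπ.adj _ this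
  rw [perm_apply_inv] at this
  exact this.symm

theorem GCycle.sq_ne {π : Equiv.Perm V} (hπ : GCycle B π) {z : V} (hz : z ∈ π.support) :
    π (π z) ≠ z := by
  intro h
  have h1 : (π ^ 2) z = z := by rw [pow_two, Equiv.Perm.mul_apply, h]
  rw [← hπ.isCycle.pow_eq_one_iff' (Equiv.Perm.mem_support.1 hz)] at h1
  have h2 := Nat.le_of_dvd (by norm_num) (orderOf_dvd_of_pow_eq_one h1)
  rw [hπ.isCycle.orderOf] at h2
  have := hπ.three_le
  omega

theorem GCycle.ne_inv {π : Equiv.Perm V} (hπ : GCycle B π) {z : V} (hz : z ∈ π.support) :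
    π z ≠ π⁻¹ z := by
  intro h
  apply hπ.sq_ne hz
  rw [h, perm_apply_inv]

/-- A directed cycle is determined up to reversal by the pair of neighbours of each vertex. -/
theorem GCycle.eq_or_inv {π π' : Equiv.Perm V} (hπ : GCycle B π)
    (hs : π'.support = π.support)
    (hn : ∀ z ∈ π.support, ({π z, π⁻¹ z} : Set V) = {π' z, π'⁻¹ z}) : π' = π ∨ π' = π⁻¹ := by
  have main : ∀ ψ : Equiv.Perm V, GCycle B ψ → ψ.support = π'.support →
      (∀ z ∈ ψ.support, ({ψ z, ψ⁻¹ z} : Set V) = {π' z, π'⁻¹ z}) →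
      ∀ x ∈ ψ.support, π' x = ψ x → π' = ψ := by
    intro ψ hψ hs hn x hx hxx
    have hpow : ∀ k : ℕ, π' ((ψ ^ k) x) = ψ ((ψ ^ k) x) := by
      intro k
      induction k with
      | zero => simpa using hxx
      | succ k ih =>
        rw [pow_succ', Equiv.Perm.mul_apply]
        set y := (ψ ^ k) x with hy
        have hym : y ∈ ψ.support := Equiv.Perm.pow_apply_mem_support.2 hx
        have h1 := hn (ψ y) (Equiv.Perm.apply_mem_support.2 hym)
        rw [perm_inv_apply] at h1
        have h2 : π'⁻¹ (ψ y) = y := by rw [← ih, perm_inv_apply]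
        rw [h2] at h1
        have h3 : ψ (ψ y) ∈ ({π' (ψ y), y} : Set V) := by rw [← h1]; simp
        rcases h3 with h3 | h3
        · exact h3.symm
        · exact absurd h3 (hψ.sq_ne hym)
    ext z
    by_cases hz : z ∈ ψ.support
    · obtain ⟨i, -, rfl⟩ := (hψ.isCycle.sameCycle (Equiv.Perm.mem_support.1 hx)
        (Equiv.Perm.mem_support.1 hz)).exists_pow_eq'
      exact hpow i
    · have hz' := hz
      rw [hs] at hz'
      rw [Equiv.Perm.notMem_support.1 hz, Equiv.Perm.notMem_support.1 hz']
  obtain ⟨x, hx⟩ : ∃ x, x ∈ π.support := by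
    apply Finset.card_pos.1; have := hπ.three_le; omega
  have h1 : π' x ∈ ({π x, π⁻¹ x} : Set V) := by rw [hn x hx]; simp
  rcases h1 with h1 | h1
  · exact Or.inl (main π hπ hs.symm hn x hx h1)
  · refine Or.inr (main π⁻¹ hπ.inv (by rw [Equiv.Perm.support_inv, hs]) ?_ x
      (by rwa [Equiv.Perm.support_inv]) h1)
    intro z hz
    rw [Equiv.Perm.support_inv] at hz
    rw [← hn z hz, inv_inv, Set.pair_comm]

theorem Traverses.neighbors {u : V} {c : B.Walk u u} {π : Equiv.Perm V} (h : Traverses c π) {z : V}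
    (hz : z ∈ π.support) : ({π z, π⁻¹ z} : Set V) = {y | s(z, y) ∈ c.edges} := by
  ext y
  simp only [Set.mem_insert_iff, Set.mem_singleton_iff, Set.mem_ofPred_eq, h.mem_edges]
  constructor
  · rintro (rfl | rfl)
    · exact ⟨z, hz, rfl⟩
    · refine ⟨π⁻¹ z, ?_, ?_⟩
      · rwa [← Equiv.Perm.apply_mem_support, perm_apply_inv]
      · rw [perm_apply_inv, Sym2.eq_swap]
  · rintro ⟨w, hw, he⟩
    rcases Sym2.eq_iff.1 he with ⟨rfl, rfl⟩ | ⟨rfl, rfl⟩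
    · exact Or.inl rfl
    · right; rw [perm_inv_apply]

theorem Traverses.sameCycle_iff {u v : V} {c : B.Walk u u} {d : B.Walk v v} {π π' : Equiv.Perm V}
    (h : Traverses c π) (h' : Traverses d π') : SameCycle c d ↔ (π' = π ∨ π' = π⁻¹) := by
  simp only [SameCycle, Finset.ext_iff, List.mem_toFinset]
  constructor
  · intro he
    refine h.perm.eq_or_inv ?_ ?_
    · have key : ∀ {a b : V} {c : B.Walk a a} {d : B.Walk b b} {π π' : Equiv.Perm V},
          Traverses c π → Traverses d π' → (∀ e, e ∈ c.edges → e ∈ d.edges) → ∀ z ∈ π.support,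
            z ∈ π'.support := by
        intro a b c d π π' h h' he z hz
        rw [h'.supp]
        exact edge_mem_support (he _ ((h.mem_edges _).2 ⟨z, hz, rfl⟩)) (by simp)
      exact Finset.Subset.antisymm (key h' h fun e => (he e).2) (key h h' fun e => (he e).1)
    · intro z hz
      have hz' : z ∈ π'.support := by
        rw [h'.supp]
        exact edge_mem_support ((he _).1 ((h.mem_edges _).2 ⟨z, hz, rfl⟩)) (by simp)
      rw [h.neighbors hz, h'.neighbors hz']
      ext y
      exact he _
  · rintro (rfl | rfl) e
    · rw [h.mem_edges, h'.mem_edges]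
    · rw [h.mem_edges, h'.mem_edges]
      constructor
      · rintro ⟨z, hz, rfl⟩
        refine ⟨π z, ?_, ?_⟩
        · rwa [Equiv.Perm.support_inv, Equiv.Perm.apply_mem_support]
        · rw [perm_inv_apply, Sym2.eq_swap]
      · rintro ⟨z, hz, rfl⟩
        rw [Equiv.Perm.support_inv] at hz
        refine ⟨π⁻¹ z, ?_, ?_⟩
        · rwa [← Equiv.Perm.apply_mem_support, perm_apply_inv]
        · rw [perm_apply_inv, Sym2.eq_swap]

end CyclePerm

/-! ### Perfect matchings as involutions -/

section Matchings

/-- A perfect matching of `G`, encoded as the involution exchanging matched vertices. -/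
def MInv {W : Type*} (G : SimpleGraph W) (τ : Equiv.Perm W) : Prop :=
  (∀ z, τ (τ z) = z) ∧ ∀ z, G.Adj z (τ z)

/-- The set of edges joining each vertex to its image under `τ`. -/
def pmOf {W : Type*} [Fintype W] [DecidableEq W] (τ : Equiv.Perm W) : Finset (Sym2 W) :=
  Finset.univ.image fun z => s(z, τ z)

variable {W : Type*} [Fintype W] [DecidableEq W] {G : SimpleGraph W}

theorem mem_pmOf_iff {τ : Equiv.Perm W} (hτ : MInv G τ) (x y : W) :
    s(x, y) ∈ pmOf τ ↔ τ x = y := by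
  simp only [pmOf, Finset.mem_image, Finset.mem_univ, true_and]
  constructor
  · rintro ⟨z, hz⟩
    rcases Sym2.eq_iff.1 hz with ⟨rfl, rfl⟩ | ⟨rfl, rfl⟩
    · rfl
    · exact hτ.1 _
  · rintro rfl
    exact ⟨x, rfl⟩

theorem isPM_pmOf {τ : Equiv.Perm W} (hτ : MInv G τ) : IsPM G (pmOf τ) := by
  constructor
  · intro e he
    simp only [pmOf, Finset.mem_image, Finset.mem_univ, true_and] at he
    obtain ⟨z, rfl⟩ := he
    exact hτ.2 z
  · intro v
    rw [Finset.card_eq_one]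
    refine ⟨s(v, τ v), ?_⟩
    ext e
    induction e with
    | h x y =>
      simp only [Finset.mem_filter, Finset.mem_singleton, mem_pmOf_iff hτ, Sym2.mem_iff,
        Sym2.eq_iff]
      constructor
      · rintro ⟨rfl, rfl | rfl⟩
        · simp
        · right; exact ⟨(hτ.1 x).symm, rfl⟩
      · rintro (⟨rfl, rfl⟩ | ⟨rfl, rfl⟩)
        · simp
        · exact ⟨hτ.1 _, Or.inr rfl⟩

theorem pmOf_inj {τ τ' : Equiv.Perm W} (hτ : MInv G τ) (hτ' : MInv G τ')
    (h : pmOf τ = pmOf τ') : τ = τ' := by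
  ext z
  have h1 := (mem_pmOf_iff hτ z (τ z)).2 rfl
  rw [h, mem_pmOf_iff hτ'] at h1
  exact h1.symm

theorem exists_minv {M : Finset (Sym2 W)} (hM : IsPM G M) : ∃ τ, MInv G τ ∧ pmOf τ = M := by
  have h1 : ∀ v, ∃ w, s(v, w) ∈ M ∧ ∀ w', s(v, w') ∈ M → w' = w := by
    intro v
    obtain ⟨e, he⟩ := Finset.card_eq_one.1 (hM.2 v)
    have hem : e ∈ M.filter (fun e => v ∈ e) := by rw [he]; simp
    rw [Finset.mem_filter] at hem
    obtain ⟨w, rfl⟩ := hem.2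
    refine ⟨w, hem.1, fun w' hw' => ?_⟩
    have : s(v, w') ∈ M.filter (fun e => v ∈ e) := by simp [hw']
    rw [he, Finset.mem_singleton] at this
    exact Sym2.congr_right.1 this
  choose f hf hf' using h1
  have hinv : ∀ z, f (f z) = z := fun z =>
    (hf' (f z) z (by rw [Sym2.eq_swap]; exact hf z)).symm
  have hτ : MInv G (Function.Involutive.toPerm f hinv) :=
    ⟨hinv, fun z => hM.1 _ (hf z)⟩
  refine ⟨_, hτ, ?_⟩
  ext e
  induction e with
  | h x y =>
    rw [mem_pmOf_iff hτ]
    refine ⟨?_, fun h => (hf' x y h).symm⟩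
    rintro rfl
    exact hf x

theorem hasPM_iff : HasPM G ↔ ∃ τ, MInv G τ := by
  constructor
  · rintro ⟨M, hM⟩
    obtain ⟨τ, hτ, -⟩ := exists_minv hM
    exact ⟨τ, hτ⟩
  · rintro ⟨τ, hτ⟩
    exact ⟨_, isPM_pmOf hτ⟩

end Matchings

section Complement
variable {V : Type*} [Fintype V] [DecidableEq V] {B : SimpleGraph V}

/-- `ρ` encodes a perfect matching of the graph left after deleting the cycle `π`: it fixes the
vertices of `π` and exchanges matched vertices elsewhere. -/
structure Comp (B : SimpleGraph V) (π ρ : Equiv.Perm V) : Prop where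
  invol : ∀ z, ρ (ρ z) = z
  fix : ∀ z ∈ π.support, ρ z = z
  adj : ∀ z, z ∉ π.support → B.Adj z (ρ z)

theorem Comp.inv {π ρ : Equiv.Perm V} (h : Comp B π ρ) : Comp B π⁻¹ ρ :=
  ⟨h.invol, by rw [Equiv.Perm.support_inv]; exact h.fix,
    by rw [Equiv.Perm.support_inv]; exact h.adj⟩

theorem Comp.notMem {π ρ : Equiv.Perm V} (h : Comp B π ρ) {z : V} (hz : z ∉ π.support) :
    ρ z ∉ π.support := by
  intro h'
  have := h.fix _ h'
  rw [h.invol] at this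
  exact (h.adj z hz).ne this

theorem Comp.mem_support {π ρ : Equiv.Perm V} (h : Comp B π ρ) (z : V) :
    z ∈ ρ.support ↔ z ∉ π.support := by
  rw [Equiv.Perm.mem_support]
  exact ⟨fun h1 h2 => h1 (h.fix z h2), fun h1 h2 => (h.adj z h1).ne h2.symm⟩

theorem Traverses.isIndep_iff {u : V} {c : B.Walk u u} {π : Equiv.Perm V} (h : Traverses c π) :
    IsIndep B c ↔ ∃ ρ, Comp B π ρ := by
  let : Fintype {x : V | x ∉ c.support} := Fintype.ofFinite _
  rw [IsIndep, hasPM_iff]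
  constructor
  · rintro ⟨τ, hτ, hadj⟩
    let f : V → V := fun z => if hz : z ∉ c.support then (τ ⟨z, hz⟩ : V) else z
    have hf1 : ∀ z (hz : z ∉ c.support), f z = τ ⟨z, hz⟩ := fun z hz => dif_pos hz
    have hf2 : ∀ z, z ∈ c.support → f z = z := fun z hz => dif_neg (not_not.2 hz)
    have hinv : ∀ z, f (f z) = z := by
      intro z
      by_cases hz : z ∈ c.support
      · rw [hf2 z hz, hf2 z hz]
      · rw [hf1 z hz, hf1 _ (τ ⟨z, hz⟩).2]
        exact congrArg Subtype.val (hτ ⟨z, hz⟩)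
    refine ⟨Function.Involutive.toPerm f hinv, hinv, ?_, ?_⟩
    · intro z hz
      exact hf2 z ((h.supp z).1 hz)
    · intro z hz
      rw [h.supp] at hz
      have := hadj ⟨z, hz⟩
      change B.Adj z (f z)
      rw [hf1 z hz]
      exact this
  · rintro ⟨ρ, hρ⟩
    have hcl : ∀ z : {x : V | x ∉ c.support}, ρ z ∉ c.support := fun z => by
      rw [← h.supp]
      exact hρ.notMem (fun hz => z.2 ((h.supp _).1 hz))
    refine ⟨Function.Involutive.toPerm (fun z => ⟨ρ z, hcl z⟩)
      (fun z => Subtype.ext (hρ.invol z)), ?_, ?_⟩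
    · intro z
      exact Subtype.ext (hρ.invol z)
    · intro z
      exact hρ.adj z (fun hz => z.2 ((h.supp _).1 hz))

/-! ### Two matchings and the cycle on which they differ -/

/-- Starting from a vertex where two involutions along edges of `B` differ, alternating between
them traces out a cycle. -/
theorem exists_alternating_cycle {τ τ' : Equiv.Perm V} (hτ : ∀ z, τ (τ z) = z)
    (hτ' : ∀ z, τ' (τ' z) = z)
    (hadj : ∀ z, τ z ≠ τ' z → B.Adj z (τ z) ∧ B.Adj z (τ' z)) {y : V} (hy : τ y ≠ τ' y) :
    ∃ π, GCycle B π ∧ ∀ z ∈ π.support, τ z ≠ τ' z ∧ ({π z, π⁻¹ z} : Set V) = {τ z, τ' z} := by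
  have hd : ∀ z, τ z ≠ τ' z → τ (τ z) ≠ τ' (τ z) := by
    intro z hz h
    rw [hτ] at h
    have := congrArg τ' h
    rw [hτ'] at this
    exact hz this.symm
  have hd' : ∀ z, τ z ≠ τ' z → τ (τ' z) ≠ τ' (τ' z) := by
    intro z hz h
    rw [hτ'] at h
    have := congrArg τ h
    rw [hτ] at this
    exact hz this.symm
  let H : SimpleGraph V :=
    { Adj := fun u v => τ u ≠ τ' u ∧ (v = τ u ∨ v = τ' u)
      symm := ⟨by
        rintro u v ⟨h, rfl | rfl⟩
        · exact ⟨hd u h, Or.inl (hτ u).symm⟩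
        · exact ⟨hd' u h, Or.inr (hτ' u).symm⟩⟩
      loopless := ⟨by
        rintro u ⟨h, h1 | h1⟩
        · exact (hadj u h).1.ne h1
        · exact (hadj u h).2.ne h1⟩ }
  have hHB : H ≤ B := by
    rintro u v ⟨h, rfl | rfl⟩
    · exact (hadj u h).1
    · exact (hadj u h).2
  have hcyc : H.IsCycles := by
    rintro v ⟨w, h, -⟩
    have : H.neighborSet v = {τ v, τ' v} := by
      ext w
      simp only [mem_neighborSet, Set.mem_insert_iff, Set.mem_singleton_iff]
      exact ⟨fun h => h.2, fun h' => ⟨h, h'⟩⟩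
    rw [this, Set.ncard_pair h]
  obtain ⟨p, hp, -⟩ := hcyc.exists_cycle_toSubgraph_verts_eq_connectedComponentSupp
    (v := y) (c := H.connectedComponentMk y) rfl ⟨τ y, hy, Or.inl rfl⟩
  obtain ⟨π, hπ⟩ := exists_rep_of_walk hp
  have hπB : GCycle B π := ⟨hπ.perm.isCycle, hπ.perm.three_le, fun z hz => hHB (hπ.perm.adj z hz)⟩
  refine ⟨π, hπB, fun z hz => ?_⟩
  have h1 : H.Adj z (π z) := hπ.perm.adj z hz
  have h2 : H.Adj z (π⁻¹ z) := hπ.perm.inv.adj z (by rwa [Equiv.Perm.support_inv])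
  have h3 := hπB.ne_inv hz
  refine ⟨h1.1, ?_⟩
  rcases h1.2 with h4 | h4 <;> rcases h2.2 with h5 | h5
  · exact absurd (h4.trans h5.symm) h3
  · rw [h4, h5]
  · rw [h4, h5, Set.pair_comm]
  · exact absurd (h4.trans h5.symm) h3

/-- Any two cycles of `B` share a vertex. -/
def CyclesMeet (B : SimpleGraph V) : Prop :=
  ∀ π π', GCycle B π → GCycle B π' → ∃ z ∈ π.support, z ∈ π'.support

theorem Comp.unique (hM : CyclesMeet B) {π ρ ρ' : Equiv.Perm V} (hπ : GCycle B π)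
    (h : Comp B π ρ) (h' : Comp B π ρ') : ρ = ρ' := by
  by_contra hne
  obtain ⟨y, hy⟩ : ∃ y, ρ y ≠ ρ' y := by
    by_contra hcon
    push Not at hcon
    exact hne (Equiv.ext hcon)
  have hout : ∀ z, ρ z ≠ ρ' z → z ∉ π.support := by
    intro z hz hzs
    exact hz ((h.fix z hzs).trans (h'.fix z hzs).symm)
  obtain ⟨π', hπ', hz⟩ := exists_alternating_cycle h.invol h'.invol
    (fun z hz => ⟨h.adj z (hout z hz), h'.adj z (hout z hz)⟩) hy
  obtain ⟨z, hz1, hz2⟩ := hM π π' hπ hπ'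
  exact hout z (hz z hz2).1 hz1

/-- The cycle `π` is the symmetric difference of the matchings `τ` and `τ'`. -/
structure Near (π τ τ' : Equiv.Perm V) : Prop where
  supp : ∀ z, z ∈ π.support ↔ τ z ≠ τ' z
  nbr : ∀ z ∈ π.support, ({π z, π⁻¹ z} : Set V) = {τ z, τ' z}

theorem Near.symm {π τ τ' : Equiv.Perm V} (h : Near π τ τ') : Near π τ' τ :=
  ⟨fun z => by rw [h.supp, ne_comm], fun z hz => by rw [h.nbr z hz, Set.pair_comm]⟩

theorem Near.inv {π τ τ' : Equiv.Perm V} (h : Near π τ τ') : Near π⁻¹ τ τ' :=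
  ⟨fun z => by rw [Equiv.Perm.support_inv, h.supp], fun z hz => by
    rw [Equiv.Perm.support_inv] at hz
    rw [← h.nbr z hz, inv_inv, Set.pair_comm]⟩

theorem Near.cycle_unique {π π' τ τ' : Equiv.Perm V} (hπ : GCycle B π) (h : Near π τ τ')
    (h' : Near π' τ τ') : π' = π ∨ π' = π⁻¹ := by
  have hs : π'.support = π.support := by
    ext z; rw [h.supp, h'.supp]
  refine hπ.eq_or_inv hs fun z hz => ?_
  rw [h.nbr z hz, h'.nbr z (by rwa [hs])]

theorem Near.matching_unique {π τ τ' τ'' : Equiv.Perm V} (h : Near π τ τ') (h' : Near π τ τ'') :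
    τ' = τ'' := by
  ext z
  by_cases hz : z ∈ π.support
  · have h1 : τ' z ∈ ({τ z, τ'' z} : Set V) := by
      rw [← h'.nbr z hz, h.nbr z hz]; simp
    rcases h1 with h1 | h1
    · exact absurd h1.symm ((h.supp z).1 hz)
    · exact h1
  · have h1 := mt (h.supp z).2 hz
    have h2 := mt (h'.supp z).2 hz
    push Not at h1 h2
    rw [← h1, h2]

/-- A matching that preserves the cycle `π` restricts to the complement of `π`. -/
theorem exists_comp_of_nbr {π τ : Equiv.Perm V} (hτ : MInv B τ)
    (hn : ∀ z ∈ π.support, τ z ∈ ({π z, π⁻¹ z} : Set V)) :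
    ∃ ρ, Comp B π ρ ∧ ∀ z, z ∉ π.support → ρ z = τ z := by
  have hcl : ∀ z ∈ π.support, τ z ∈ π.support := by
    intro z hz
    rcases hn z hz with h | h
    · rw [h]; exact Equiv.Perm.apply_mem_support.2 hz
    · rw [h]
      rwa [← Equiv.Perm.apply_mem_support, perm_apply_inv]
  have hcl' : ∀ z, z ∉ π.support → τ z ∉ π.support := by
    intro z hz h
    have := hcl _ h
    rw [hτ.1] at this
    exact hz this
  let f : V → V := fun z => if z ∈ π.support then z else τ z
  have hf1 : ∀ z, z ∈ π.support → f z = z := fun z hz => if_pos hz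
  have hf2 : ∀ z, z ∉ π.support → f z = τ z := fun z hz => if_neg hz
  have hinv : ∀ z, f (f z) = z := by
    intro z
    by_cases hz : z ∈ π.support
    · rw [hf1 z hz, hf1 z hz]
    · rw [hf2 z hz, hf2 _ (hcl' z hz), hτ.1]
  refine ⟨Function.Involutive.toPerm f hinv, ⟨hinv, hf1, ?_⟩, hf2⟩
  intro z hz
  change B.Adj z (f z)
  rw [hf2 z hz]
  exact hτ.2 z

/-- Two distinct perfect matchings differ exactly along one independent cycle. -/
theorem exists_near_of_ne (hM : CyclesMeet B) {τ τ' : Equiv.Perm V} (hτ : MInv B τ)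
    (hτ' : MInv B τ') (hne : τ ≠ τ') :
    ∃ π, GCycle B π ∧ Near π τ τ' ∧ ∃ ρ, Comp B π ρ := by
  obtain ⟨y, hy⟩ : ∃ y, τ y ≠ τ' y := by
    by_contra hcon
    push Not at hcon
    exact hne (Equiv.ext hcon)
  obtain ⟨π, hπ, hz⟩ := exists_alternating_cycle hτ.1 hτ'.1
    (fun z _ => ⟨hτ.2 z, hτ'.2 z⟩) hy
  obtain ⟨ρ, hρ, h1⟩ := exists_comp_of_nbr (π := π) hτ
    (fun z hz' => by rw [(hz z hz').2]; simp)
  obtain ⟨ρ', hρ', h2⟩ := exists_comp_of_nbr (π := π) hτ'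
    (fun z hz' => by rw [(hz z hz').2]; simp)
  obtain rfl := hρ.unique hM hπ hρ'
  refine ⟨π, hπ, ⟨fun z => ⟨fun h => (hz z h).1, fun h => ?_⟩, fun z h => (hz z h).2⟩, ρ, hρ⟩
  by_contra hzs
  exact h ((h1 z hzs).symm.trans (h2 z hzs))

/-- The matching that uses the edges `z ↦ π z` of `π` at the vertices satisfying `e`, and agrees
with `ρ` off `π`. -/
theorem exists_half {π ρ : Equiv.Perm V} (hπ : GCycle B π) (hρ : Comp B π ρ) (e : V → Prop)
    (he : ∀ z ∈ π.support, (e (π z) ↔ ¬ e z)) :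
    ∃ τ, MInv B τ ∧ (∀ z ∈ π.support, e z → τ z = π z) ∧
      (∀ z ∈ π.support, ¬ e z → τ z = π⁻¹ z) ∧ ∀ z, z ∉ π.support → τ z = ρ z := by
  classical
  have hi : ∀ z ∈ π.support, π⁻¹ z ∈ π.support := by
    intro z hz
    rwa [← Equiv.Perm.apply_mem_support, perm_apply_inv]
  have hp : ∀ z ∈ π.support, π z ∈ π.support := fun z hz => Equiv.Perm.apply_mem_support.2 hz
  let f : V → V := fun z => if z ∈ π.support then (if e z then π z else π⁻¹ z) else ρ z
  have hf1 : ∀ z ∈ π.support, e z → f z = π z := fun z hz h => by simp only [f, if_pos hz, if_pos h]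
  have hf2 : ∀ z ∈ π.support, ¬ e z → f z = π⁻¹ z := fun z hz h => by
    simp only [f, if_pos hz, if_neg h]
  have hf3 : ∀ z, z ∉ π.support → f z = ρ z := fun z hz => if_neg hz
  have hinv : ∀ z, f (f z) = z := by
    intro z
    by_cases hz : z ∈ π.support
    · by_cases h : e z
      · rw [hf1 z hz h, hf2 _ (hp z hz) (fun h' => (he z hz).1 h' h), perm_inv_apply]
      · have h' : e (π⁻¹ z) := by
          have := he _ (hi z hz)
          rw [perm_apply_inv] at this
          tauto
        rw [hf2 z hz h, hf1 _ (hi z hz) h', perm_apply_inv]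
    · rw [hf3 z hz, hf3 _ (hρ.notMem hz), hρ.invol]
  refine ⟨Function.Involutive.toPerm f hinv, ⟨hinv, fun z => ?_⟩, hf1, hf2, hf3⟩
  change B.Adj z (f z)
  by_cases hz : z ∈ π.support
  · by_cases h : e z
    · rw [hf1 z hz h]; exact hπ.adj z hz
    · rw [hf2 z hz h]; exact hπ.inv.adj z (by rwa [Equiv.Perm.support_inv])
  · rw [hf3 z hz]; exact hρ.adj z hz

/-- An independent cycle of even length is the symmetric difference of two perfect matchings. -/
theorem exists_near_of_even {π ρ : Equiv.Perm V} (hπ : GCycle B π) (hρ : Comp B π ρ)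
    (hev : Even π.support.card) : ∃ τ τ', MInv B τ ∧ MInv B τ' ∧ τ ≠ τ' ∧ Near π τ τ' := by
  obtain ⟨x, hx⟩ : ∃ x, x ∈ π.support := by
    apply Finset.card_pos.1; have := hπ.three_le; omega
  -- the vertices at even distance from `x` along the cycle
  let e : V → Prop := fun z => ∃ k : ℤ, Even k ∧ (π ^ k) x = z
  have he : ∀ z ∈ π.support, (e (π z) ↔ ¬ e z) := by
    intro z hz
    constructor
    · rintro ⟨k, hk, h1⟩ ⟨l, hl, rfl⟩
      have h2 : (π ^ (k - (l + 1))) x = x := by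
        rw [sub_eq_neg_add, zpow_add, Equiv.Perm.mul_apply, h1, ← Equiv.Perm.mul_apply,
          ← Equiv.Perm.mul_apply, mul_assoc, ← zpow_one_add, add_comm 1 l, ← zpow_add]
        simp
      have h3 : (orderOf π : ℤ) ∣ k - (l + 1) := by
        rw [orderOf_dvd_iff_zpow_eq_one]
        ext w
        by_cases hw : w ∈ π.support
        · obtain ⟨i, rfl⟩ := hπ.isCycle.sameCycle (Equiv.Perm.mem_support.1 hx)
            (Equiv.Perm.mem_support.1 hw)
          rw [← Equiv.Perm.mul_apply, ← zpow_add, add_comm, zpow_add, Equiv.Perm.mul_apply, h2]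
          rfl
        · exact Equiv.Perm.zpow_apply_eq_self_of_apply_eq_self (Equiv.Perm.notMem_support.1 hw) _
      rw [hπ.isCycle.orderOf] at h3
      have h4 : (2 : ℤ) ∣ k - (l + 1) :=
        dvd_trans (by exact_mod_cast hev.two_dvd) h3
      obtain ⟨a, rfl⟩ := hk
      obtain ⟨b, rfl⟩ := hl
      omega
    · intro hnot
      obtain ⟨i, rfl⟩ := hπ.isCycle.sameCycle (Equiv.Perm.mem_support.1 hx)
        (Equiv.Perm.mem_support.1 hz)
      have hi : ¬ Even i := fun h => hnot ⟨i, h, rfl⟩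
      refine ⟨1 + i, ?_, by rw [zpow_one_add, Equiv.Perm.mul_apply]⟩
      rw [Int.not_even_iff_odd] at hi
      rw [add_comm]
      exact hi.add_one
  obtain ⟨τ, hτ, h1, h2, h3⟩ := exists_half hπ hρ e he
  obtain ⟨τ', hτ', h1', h2', h3'⟩ := exists_half hπ hρ (fun z => ¬ e z)
    (fun z hz => not_congr (he z hz))
  have hpair : ∀ z ∈ π.support, ({π z, π⁻¹ z} : Set V) = {τ z, τ' z} := by
    intro z hz
    by_cases h : e z
    · rw [h1 z hz h, h2' z hz (not_not.2 h)]
    · rw [h2 z hz h, h1' z hz h, Set.pair_comm]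
  have hdiff : ∀ z ∈ π.support, τ z ≠ τ' z := by
    intro z hz
    by_cases h : e z
    · rw [h1 z hz h, h2' z hz (not_not.2 h)]
      exact hπ.ne_inv hz
    · rw [h2 z hz h, h1' z hz h]
      exact (hπ.ne_inv hz).symm
  refine ⟨τ, τ', hτ, hτ', ?_, fun z => ⟨hdiff z, fun h => ?_⟩, hpair⟩
  · rintro rfl
    exact hdiff x hx rfl
  · by_contra hz
    exact h ((h3 z hz).trans (h3' z hz).symm)

end Complement

/-! ### Expansion of the determinant -/

theorem re_intCast_mul (k : ℤ) (w : ℂ) : ((k : ℂ) * w).re = k * w.re := by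
  simp

theorem ThreeColored.star_entry {V : Type*} {B : SimpleGraph V} {A : Matrix V V ℂ}
    (hA : ThreeColored B A) (u v : V) : star (A u v) = A v u :=
  hA.1.apply v u

theorem ThreeColored.entry_mul {V : Type*} {B : SimpleGraph V} {A : Matrix V V ℂ}
    (hA : ThreeColored B A) {u v : V} (h : B.Adj u v) :
    A u v * A v u = 1 := by
  rw [← hA.star_entry u v]
  have := hA.2.2.1 u v h
  simp only [Set.mem_insert_iff, Set.mem_singleton_iff] at this
  rcases this with h | h | h | h <;> rw [h] <;> simp

/-- Matched vertices contribute conjugate unit entries, which cancel in pairs. -/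
theorem prod_matched {V : Type*} {B : SimpleGraph V} {A : Matrix V V ℂ}
    (hA : ThreeColored B A) {ρ : Equiv.Perm V} (hρ : ∀ z, ρ (ρ z) = z)
    (s : Finset V) (hs : ∀ z ∈ s, ρ z ∈ s) (hadj : ∀ z ∈ s, B.Adj z (ρ z)) :
    ∏ z ∈ s, A z (ρ z) = 1 := by
  refine Finset.prod_involution (fun z _ => ρ z) ?_ ?_ ?_ ?_
  · intro z hz
    rw [hρ]
    exact hA.entry_mul (hadj z hz)
  · intro z hz _
    exact (hadj z hz).ne'
  · exact hs
  · intro z _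
    exact hρ z

section Determinant
variable {V : Type*} [Fintype V] [DecidableEq V] {B : SimpleGraph V} {A : Matrix V V ℂ}

/-- The weight of the directed cycle encoded by `π`. -/
def cycleWeight (A : Matrix V V ℂ) (π : Equiv.Perm V) : ℂ := ∏ z ∈ π.support, A z (π z)

theorem cycleWeight_inv (hA : ThreeColored B A) (π : Equiv.Perm V) :
    cycleWeight A π⁻¹ = star (cycleWeight A π) := by
  rw [cycleWeight, cycleWeight, star_prod, Equiv.Perm.support_inv]
  refine Finset.prod_bij' (fun z _ => π⁻¹ z) (fun z _ => π z) ?_ ?_ ?_ ?_ ?_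
  · intro z hz
    rwa [← Equiv.Perm.apply_mem_support, perm_apply_inv]
  · intro z hz
    rwa [Equiv.Perm.apply_mem_support]
  · intro z _
    exact perm_apply_inv π z
  · intro z _
    exact perm_inv_apply π z
  · intro z _
    rw [hA.star_entry, perm_apply_inv]

theorem sign_of_involution {ρ : Equiv.Perm V} (hρ : ∀ z, ρ (ρ z) = z) :
    ∃ k, ρ.support.card = 2 * k ∧ Equiv.Perm.sign ρ = (-1) ^ k := by
  have h2 : ρ ^ 2 = 1 := by
    ext z
    rw [pow_two, Equiv.Perm.mul_apply, hρ]
    rfl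
  have : Fact (Nat.Prime 2) := ⟨Nat.prime_two⟩
  have hc := Equiv.Perm.cycleType_of_pow_prime_eq_one h2
  have hs : ρ.cycleType.sum = 2 * ρ.cycleType.card := by
    conv_lhs => rw [hc]
    rw [Multiset.sum_replicate, smul_eq_mul, mul_comm]
  refine ⟨ρ.cycleType.card, ?_, ?_⟩
  · rw [← Equiv.Perm.sum_cycleType, hs]
  · rw [Equiv.Perm.sign_of_cycleType, hs, pow_add, pow_mul]
    simp

/-- The term of `σ` in the Leibniz expansion of the determinant. -/
noncomputable def detTerm (A : Matrix V V ℂ) (σ : Equiv.Perm V) : ℂ :=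
  ((Equiv.Perm.sign σ : ℤ) : ℂ) * ∏ z, A z (σ z)

theorem det_eq_sum_detTerm (A : Matrix V V ℂ) : A.det = ∑ σ, detTerm A σ := by
  rw [← Matrix.det_transpose, Matrix.det_apply']
  rfl

theorem detTerm_eq_zero (hA : ThreeColored B A) {σ : Equiv.Perm V} {z : V}
    (hz : ¬ B.Adj z (σ z)) : detTerm A σ = 0 := by
  have h0 : A z (σ z) = 0 := by
    by_cases h : z = σ z
    · rw [← h]; exact hA.2.1 z
    · exact hA.2.2.2 _ _ h hz
  rw [detTerm, Finset.prod_eq_zero (Finset.mem_univ z) h0, mul_zero]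

theorem MInv.support_card {τ : Equiv.Perm V} (hτ : MInv B τ) :
    τ.support.card = Fintype.card V := by
  rw [← Finset.card_univ]
  congr 1
  ext z
  simp only [Equiv.Perm.mem_support, Finset.mem_univ, iff_true]
  exact (hτ.2 z).ne'

theorem MInv.sign {τ : Equiv.Perm V} (hτ : MInv B τ) :
    Even (Fintype.card V) ∧ Equiv.Perm.sign τ = (-1) ^ (Fintype.card V / 2) := by
  obtain ⟨k, hk, hs⟩ := sign_of_involution hτ.1
  rw [hτ.support_card] at hk
  rw [hs, hk]
  exact ⟨⟨k, by omega⟩, by congr 1; omega⟩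

theorem detTerm_matching (hA : ThreeColored B A) {τ : Equiv.Perm V} (hτ : MInv B τ) :
    detTerm A τ = (-1) ^ (Fintype.card V / 2) := by
  rw [detTerm, prod_matched hA hτ.1 _ (fun _ _ => Finset.mem_univ _) (fun z _ => hτ.2 z),
    hτ.sign.2]
  simp

theorem Comp.sign {π ρ : Equiv.Perm V} (h : Comp B π ρ) :
    ∃ k, Fintype.card V = π.support.card + 2 * k ∧ Equiv.Perm.sign ρ = (-1) ^ k := by
  obtain ⟨k, hk, hs⟩ := sign_of_involution h.invol
  refine ⟨k, ?_, hs⟩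
  have : ρ.support = π.supportᶜ := by
    ext z
    rw [h.mem_support, Finset.mem_compl]
  rw [← hk, this, Finset.card_add_card_compl]

theorem Comp.mul_apply_mem {π ρ : Equiv.Perm V} (h : Comp B π ρ) {z : V} (hz : z ∈ π.support) :
    (π * ρ) z = π z := by
  rw [Equiv.Perm.mul_apply, h.fix z hz]

theorem Comp.mul_apply_notMem {π ρ : Equiv.Perm V} (h : Comp B π ρ) {z : V}
    (hz : z ∉ π.support) : (π * ρ) z = ρ z := by
  rw [Equiv.Perm.mul_apply]
  exact Equiv.Perm.notMem_support.1 (h.notMem hz)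

theorem detTerm_cycle (hA : ThreeColored B A) {π ρ : Equiv.Perm V} (h : Comp B π ρ) :
    detTerm A (π * ρ) =
      (((Equiv.Perm.sign π * Equiv.Perm.sign ρ : ℤˣ) : ℤ) : ℂ) * cycleWeight A π := by
  have h1 : ∏ z, A z ((π * ρ) z) = cycleWeight A π := by
    rw [← Finset.prod_mul_prod_compl π.support, cycleWeight]
    have h2 : ∏ z ∈ π.supportᶜ, A z ((π * ρ) z) = ∏ z ∈ π.supportᶜ, A z (ρ z) :=
      Finset.prod_congr rfl fun z hz => by
        rw [h.mul_apply_notMem (Finset.mem_compl.1 hz)]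
    rw [h2, prod_matched hA h.invol, mul_one]
    · exact Finset.prod_congr rfl fun z hz => by rw [h.mul_apply_mem hz]
    · intro z hz
      exact Finset.mem_compl.2 (h.notMem (Finset.mem_compl.1 hz))
    · intro z hz
      exact h.adj z (Finset.mem_compl.1 hz)
  rw [detTerm, h1, Equiv.Perm.sign_mul]

theorem gcycle_cycleOf {σ : Equiv.Perm V} (hσ : ∀ z, B.Adj z (σ z)) {x : V}
    (hx : σ (σ x) ≠ x) : GCycle B (σ.cycleOf x) := by
  have hm : ∀ z, z ∈ (σ.cycleOf x).support ↔ σ.SameCycle x z := by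
    intro z
    rw [Equiv.Perm.mem_support_cycleOf_iff, Equiv.Perm.mem_support]
    exact and_iff_left (hσ x).ne'
  refine ⟨Equiv.Perm.isCycle_cycleOf σ (hσ x).ne', ?_, ?_⟩
  · have hsub : ({x, σ x, σ (σ x)} : Finset V) ⊆ (σ.cycleOf x).support := by
      intro z hz
      simp only [Finset.mem_insert, Finset.mem_singleton] at hz
      rw [hm]
      rcases hz with rfl | rfl | rfl
      · exact Equiv.Perm.SameCycle.refl _ _
      · rw [Equiv.Perm.sameCycle_apply_right]
      · rw [Equiv.Perm.sameCycle_apply_right, Equiv.Perm.sameCycle_apply_right]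
    refine le_trans (le_of_eq ?_) (Finset.card_le_card hsub)
    rw [Finset.card_insert_of_notMem, Finset.card_pair (hσ (σ x)).ne]
    simp only [Finset.mem_insert, Finset.mem_singleton, not_or]
    exact ⟨(hσ x).ne, hx.symm⟩
  · intro z hz
    rw [hm] at hz
    rw [hz.cycleOf_apply]
    exact hσ z

/-- As any two cycles meet, a permutation moving every vertex along an edge either is a perfect
matching or consists of one cycle together with a perfect matching of the rest. -/
theorem minv_or_cycle (hM : CyclesMeet B) {σ : Equiv.Perm V} (hσ : ∀ z, B.Adj z (σ z)) :
    MInv B σ ∨ ∃ π ρ, GCycle B π ∧ Comp B π ρ ∧ σ = π * ρ := by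
  by_cases h : ∀ z, σ (σ z) = z
  · exact Or.inl ⟨h, hσ⟩
  right
  push Not at h
  obtain ⟨x, hx⟩ := h
  have hπ := gcycle_cycleOf hσ hx
  have hm : ∀ z, z ∈ (σ.cycleOf x).support ↔ σ.SameCycle x z := by
    intro z
    rw [Equiv.Perm.mem_support_cycleOf_iff, Equiv.Perm.mem_support]
    exact and_iff_left (hσ x).ne'
  have hon : ∀ z, σ.SameCycle x z → ((σ.cycleOf x)⁻¹ * σ) z = z := by
    intro z hz
    rw [Equiv.Perm.mul_apply, ← hz.cycleOf_apply, perm_inv_apply]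
  have hoff : ∀ z, ¬ σ.SameCycle x z → ((σ.cycleOf x)⁻¹ * σ) z = σ z := by
    intro z hz
    rw [Equiv.Perm.mul_apply, Equiv.Perm.inv_eq_iff_eq,
      Equiv.Perm.cycleOf_apply_of_not_sameCycle]
    rwa [Equiv.Perm.sameCycle_apply_right]
  refine ⟨σ.cycleOf x, (σ.cycleOf x)⁻¹ * σ, hπ, ⟨?_, ?_, ?_⟩, ?_⟩
  · intro z
    by_cases hz : σ.SameCycle x z
    · rw [hon z hz, hon z hz]
    · rw [hoff z hz, hoff _ (by rwa [Equiv.Perm.sameCycle_apply_right])]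
      by_contra hzz
      obtain ⟨y, hy1, hy2⟩ := hM _ _ hπ (gcycle_cycleOf hσ hzz)
      rw [hm] at hy1
      rw [Equiv.Perm.mem_support_cycleOf_iff] at hy2
      exact hz (hy1.trans hy2.1.symm)
  · intro z hz
    exact hon z ((hm z).1 hz)
  · intro z hz
    rw [hm] at hz
    rw [hoff z hz]
    exact hσ z
  · rw [mul_inv_cancel_left]

theorem det_ne_zero_iff (hA : ThreeColored B A) : A.det ≠ 0 ↔ A.det.re ≠ 0 := by
  have h : star A.det = A.det := by
    rw [← Matrix.det_conjTranspose, hA.1.eq]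
  have him : A.det.im = 0 := Complex.conj_eq_iff_im.1 h
  rw [not_iff_not, Complex.ext_iff]
  simp [him]

/-- The cycle `π₁` has weight `±1`, and every other cycle has weight `±i`. -/
structure OneReal (B : SimpleGraph V) (A : Matrix V V ℂ) (π₁ : Equiv.Perm V) : Prop where
  cyc : GCycle B π₁
  real : cycleWeight A π₁ = 1 ∨ cycleWeight A π₁ = -1
  imag : ∀ π, GCycle B π → π ≠ π₁ → π ≠ π₁⁻¹ →
    cycleWeight A π = Complex.I ∨ cycleWeight A π = -Complex.I

theorem OneReal.inv_weight (hA : ThreeColored B A) {π₁ : Equiv.Perm V} (h : OneReal B A π₁) :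
    cycleWeight A π₁⁻¹ = cycleWeight A π₁ := by
  rw [cycleWeight_inv hA]
  rcases h.real with h | h <;> rw [h] <;> simp

/-- Only perfect matchings and the cycle of real weight contribute to the real part. -/
theorem OneReal.re_detTerm_eq_zero (hA : ThreeColored B A) (hM : CyclesMeet B)
    {π₁ : Equiv.Perm V} (h : OneReal B A π₁) {σ : Equiv.Perm V} (h1 : ¬ MInv B σ)
    (h2 : ∀ ρ, Comp B π₁ ρ → σ ≠ π₁ * ρ ∧ σ ≠ π₁⁻¹ * ρ) : (detTerm A σ).re = 0 := by
  by_cases hσ : ∀ z, B.Adj z (σ z)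
  · obtain h3 | ⟨π, ρ, hπ, hρ, rfl⟩ := minv_or_cycle hM hσ
    · exact absurd h3 h1
    · rw [detTerm_cycle hA hρ]
      have e1 : π ≠ π₁ := by
        rintro rfl
        exact (h2 ρ hρ).1 rfl
      have e2 : π ≠ π₁⁻¹ := by
        rintro rfl
        have := hρ.inv
        rw [inv_inv] at this
        exact (h2 ρ this).2 rfl
      rcases h.imag π hπ e1 e2 with h4 | h4 <;> rw [h4] <;> simp
  · push Not at hσ
    obtain ⟨z, hz⟩ := hσ
    rw [detTerm_eq_zero hA hz]
    rfl

/-- The number of perfect matchings of `B`, counted as involutions. -/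
noncomputable def matchCount (B : SimpleGraph V) : ℕ :=
  {τ : Equiv.Perm V | MInv B τ}.ncard

open Classical in
theorem matchCount_eq (B : SimpleGraph V) :
    matchCount B = (Finset.univ.filter (MInv B)).card := by
  rw [matchCount, ← Set.ncard_coe_finset]
  congr 1
  ext τ
  simp

theorem OneReal.re_det_of_not_indep (hA : ThreeColored B A) (hM : CyclesMeet B)
    {π₁ : Equiv.Perm V} (h : OneReal B A π₁) (hi : ¬ ∃ ρ, Comp B π₁ ρ) :
    A.det.re = (-1) ^ (Fintype.card V / 2) * (matchCount B : ℝ) := by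
  classical
  rw [det_eq_sum_detTerm, Complex.re_sum]
  have : ∀ σ ∈ (Finset.univ : Finset (Equiv.Perm V)), (detTerm A σ).re =
      if MInv B σ then (-1 : ℝ) ^ (Fintype.card V / 2) else 0 := by
    intro σ _
    split_ifs with h1
    · rw [detTerm_matching hA h1]
      norm_cast
    · exact h.re_detTerm_eq_zero hA hM h1 fun ρ hρ => absurd ⟨ρ, hρ⟩ hi
  rw [Finset.sum_congr rfl this, ← Finset.sum_filter, Finset.sum_const, matchCount_eq,
    nsmul_eq_mul, mul_comm]

theorem OneReal.re_det_of_indep (hA : ThreeColored B A) (hM : CyclesMeet B)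
    {π₁ ρ : Equiv.Perm V} (h : OneReal B A π₁) (hρ : Comp B π₁ ρ) :
    A.det.re = (-1) ^ (Fintype.card V / 2) * (matchCount B : ℝ) +
      2 * (((Equiv.Perm.sign π₁ * Equiv.Perm.sign ρ : ℤˣ) : ℤ) : ℝ) * (cycleWeight A π₁).re := by
  classical
  obtain ⟨x, hx⟩ : ∃ x, x ∈ π₁.support := by
    apply Finset.card_pos.1; have := h.cyc.three_le; omega
  have hne : π₁ * ρ ≠ π₁⁻¹ * ρ := by
    intro he
    have := congrArg (fun σ : Equiv.Perm V => σ x) he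
    simp only [Equiv.Perm.mul_apply, hρ.fix x hx] at this
    exact h.cyc.ne_inv hx this
  have hnm : ∀ π : Equiv.Perm V, GCycle B π → x ∈ π.support → Comp B π ρ →
      ¬ MInv B (π * ρ) := by
    intro π hπ hxπ hρπ hm
    have := hm.1 x
    rw [hρπ.mul_apply_mem hxπ, hρπ.mul_apply_mem (by rwa [Equiv.Perm.apply_mem_support])] at this
    exact hπ.sq_ne hxπ this
  have hn1 := hnm _ h.cyc hx hρ
  have hn2 := hnm _ h.cyc.inv (by rwa [Equiv.Perm.support_inv]) hρ.inv
  set c : ℝ := (((Equiv.Perm.sign π₁ * Equiv.Perm.sign ρ : ℤˣ) : ℤ) : ℝ) *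
    (cycleWeight A π₁).re with hc
  have hc1 : (detTerm A (π₁ * ρ)).re = c := by
    rw [detTerm_cycle hA hρ, re_intCast_mul]
  have hc2 : (detTerm A (π₁⁻¹ * ρ)).re = c := by
    rw [detTerm_cycle hA hρ.inv, re_intCast_mul, h.inv_weight hA, Equiv.Perm.sign_inv]
  rw [det_eq_sum_detTerm, Complex.re_sum]
  have : ∀ σ ∈ (Finset.univ : Finset (Equiv.Perm V)), (detTerm A σ).re =
      (if MInv B σ then (-1 : ℝ) ^ (Fintype.card V / 2) else 0) +
      ((if σ = π₁ * ρ then c else 0) + if σ = π₁⁻¹ * ρ then c else 0) := by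
    intro σ _
    by_cases h1 : MInv B σ
    · have e1 : σ ≠ π₁ * ρ := by rintro rfl; exact hn1 h1
      have e2 : σ ≠ π₁⁻¹ * ρ := by rintro rfl; exact hn2 h1
      rw [if_pos h1, if_neg e1, if_neg e2, detTerm_matching hA h1]
      norm_cast
      simp
    · rw [if_neg h1]
      by_cases e1 : σ = π₁ * ρ
      · rw [if_pos e1, if_neg (by rw [e1]; exact hne), e1, hc1]
        ring
      · by_cases e2 : σ = π₁⁻¹ * ρ
        · rw [if_neg e1, if_pos e2, e2, hc2]
          ring
        · rw [if_neg e1, if_neg e2, h.re_detTerm_eq_zero hA hM h1]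
          · ring
          · intro ρ' hρ'
            rw [Comp.unique hM h.cyc hρ' hρ]
            exact ⟨e1, e2⟩
  rw [Finset.sum_congr rfl this, Finset.sum_add_distrib, Finset.sum_add_distrib,
    ← Finset.sum_filter, Finset.sum_const, matchCount_eq, Finset.sum_ite_eq' Finset.univ,
    Finset.sum_ite_eq' Finset.univ, if_pos (Finset.mem_univ _), if_pos (Finset.mem_univ _),
    nsmul_eq_mul]
  ring

end Determinant

/-! ### Nonsingularity in terms of matchings and cyclic permutations -/

section Core
variable {V : Type*} [Fintype V] [DecidableEq V] {B : SimpleGraph V} {A : Matrix V V ℂ}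

theorem OneReal.eq_of_real {π₁ π : Equiv.Perm V} (h : OneReal B A π₁) (hπ : GCycle B π)
    (hw : cycleWeight A π = 1 ∨ cycleWeight A π = -1) : π = π₁ ∨ π = π₁⁻¹ := by
  by_contra hcon
  push Not at hcon
  have him : (cycleWeight A π).im = 0 := by rcases hw with h1 | h1 <;> rw [h1] <;> simp
  rcases h.imag π hπ hcon.1 hcon.2 with h1 | h1 <;> rw [h1] at him <;> simp at him

theorem exists_comp_of_eq_or_inv {π π' : Equiv.Perm V} (h : ∃ ρ, Comp B π ρ)
    (he : π = π' ∨ π = π'⁻¹) : ∃ ρ, Comp B π' ρ := by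
  obtain ⟨ρ, hρ⟩ := h
  rcases he with rfl | rfl
  · exact ⟨ρ, hρ⟩
  · have := hρ.inv
    rw [inv_inv] at this
    exact ⟨ρ, this⟩

/-- Without perfect matchings, only the real cycle contributes to the real part, and it cannot be
even, for then its alternate edges would complete a perfect matching. -/
theorem OneReal.core_zero (hA : ThreeColored B A) (hM : CyclesMeet B) {π₁ : Equiv.Perm V}
    (h : OneReal B A π₁) (h0 : ¬ ∃ τ, MInv B τ) :
    A.det.re ≠ 0 ↔ ∃ π, GCycle B π ∧ (∃ ρ, Comp B π ρ) ∧ Odd π.support.card ∧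
      (cycleWeight A π = 1 ∨ cycleWeight A π = -1) := by
  have hm : matchCount B = 0 := by
    rw [matchCount, Set.ncard_eq_zero (Set.toFinite _)]
    ext τ
    simp only [Set.mem_ofPred_eq, Set.mem_empty_iff_false, iff_false]
    exact fun hτ => h0 ⟨τ, hτ⟩
  constructor
  · intro hne
    by_cases hi : ∃ ρ, Comp B π₁ ρ
    · refine ⟨π₁, h.cyc, hi, ?_, h.real⟩
      by_contra hev
      rw [Nat.not_odd_iff_even] at hev
      obtain ⟨ρ, hρ⟩ := hi
      obtain ⟨τ, -, hτ, -⟩ := exists_near_of_even h.cyc hρ hev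
      exact h0 ⟨τ, hτ⟩
    · rw [h.re_det_of_not_indep hA hM hi, hm] at hne
      simp at hne
  · rintro ⟨π, hπ, hi, -, hw⟩
    obtain ⟨ρ, hρ⟩ := exists_comp_of_eq_or_inv hi (h.eq_of_real hπ hw)
    rw [h.re_det_of_indep hA hM hρ, hm]
    rcases Int.units_eq_one_or (Equiv.Perm.sign π₁ * Equiv.Perm.sign ρ) with e | e <;>
      rcases h.real with e' | e' <;> rw [e, e'] <;> simp

/-- If the number of perfect matchings is positive and not two, it exceeds or falls short of
the possible contribution `0` or `±2` of the real cycle. -/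
theorem OneReal.core_ne_two (hA : ThreeColored B A) (hM : CyclesMeet B) {π₁ : Equiv.Perm V}
    (h : OneReal B A π₁) (h0 : matchCount B ≠ 0) (h2 : matchCount B ≠ 2) : A.det.re ≠ 0 := by
  have h0' : (matchCount B : ℝ) ≠ 0 := by exact_mod_cast h0
  have h2' : (matchCount B : ℝ) ≠ 2 := by exact_mod_cast h2
  have hp : (matchCount B : ℝ) ≥ 0 := Nat.cast_nonneg _
  by_cases hi : ∃ ρ, Comp B π₁ ρ
  · obtain ⟨ρ, hρ⟩ := hi
    rw [h.re_det_of_indep hA hM hρ]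
    intro hz
    rcases Int.units_eq_one_or (Equiv.Perm.sign π₁ * Equiv.Perm.sign ρ) with e | e <;>
      rcases h.real with e' | e' <;>
      rcases neg_one_pow_eq_or ℝ (Fintype.card V / 2) with e'' | e'' <;>
      rw [e, e', e''] at hz <;> simp at hz <;>
      exact h2' (by linarith)
  · rw [h.re_det_of_not_indep hA hM hi]
    rcases neg_one_pow_eq_or ℝ (Fintype.card V / 2) with e | e <;> rw [e] <;> simpa using h0

/-- If `τ` and `τ'` are the only perfect matchings, then the cycle `π` on which they differ is the
only independent cycle, up to direction. -/
theorem indep_unique {τ τ' π : Equiv.Perm V} (hset : {τ : Equiv.Perm V | MInv B τ} = {τ, τ'})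
    (hπ : GCycle B π) (hn : Near π τ τ') (π' : Equiv.Perm V) (hπ' : GCycle B π')
    (hi' : ∃ ρ, Comp B π' ρ) : π' = π ∨ π' = π⁻¹ := by
  have hτ : MInv B τ := by
    have : τ ∈ {τ : Equiv.Perm V | MInv B τ} := by rw [hset]; simp
    exact this
  obtain ⟨ρ, hρ⟩ := hi'
  obtain ⟨k, hk, -⟩ := hρ.sign
  have hev : Even π'.support.card := by
    have := hτ.sign.1
    rw [hk, Nat.even_add] at this
    exact this.2 (even_two_mul k)
  obtain ⟨μ, μ', hμ, hμ', hne, hnear⟩ := exists_near_of_even hπ' hρ hev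
  have h1 : μ ∈ ({τ, τ'} : Set (Equiv.Perm V)) := by rw [← hset]; exact hμ
  have h2 : μ' ∈ ({τ, τ'} : Set (Equiv.Perm V)) := by rw [← hset]; exact hμ'
  rcases h1 with rfl | rfl <;> rcases h2 with rfl | rfl
  · exact absurd rfl hne
  · exact hn.cycle_unique hπ hnear
  · exact hn.cycle_unique hπ hnear.symm
  · exact absurd rfl hne

/-- With two perfect matchings and an independent even real cycle of length `k`, the real part of
the determinant is `±2 ((-1) ^ (k / 2) - w)`. -/
theorem OneReal.re_det_two (hA : ThreeColored B A) (hM : CyclesMeet B) {π₁ ρ : Equiv.Perm V}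
    (h : OneReal B A π₁) (hρ : Comp B π₁ ρ) (h2 : matchCount B = 2)
    (hev : Even π₁.support.card) :
    A.det.re ≠ 0 ↔ (cycleWeight A π₁).re ≠ (-1) ^ (π₁.support.card / 2) := by
  obtain ⟨j, hj, hs⟩ := hρ.sign
  obtain ⟨l, hl⟩ := hev
  have e1 : Fintype.card V / 2 = l + j := by omega
  have e2 : π₁.support.card / 2 = l := by omega
  have e3 : Equiv.Perm.sign π₁ = -1 := by
    rw [h.cyc.isCycle.sign, hl, Even.neg_one_pow ⟨l, rfl⟩]
  rw [h.re_det_of_indep hA hM hρ, h2, e1, e2, e3, hs, pow_add, not_iff_not]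
  push_cast
  rcases neg_one_pow_eq_or ℝ j with e | e <;> rw [e] <;> constructor <;> intro <;> linarith

theorem OneReal.core_two (hA : ThreeColored B A) (hM : CyclesMeet B) {π₁ : Equiv.Perm V}
    (h : OneReal B A π₁) (h2 : matchCount B = 2) :
    A.det.re ≠ 0 ↔ ((∃ π π', GCycle B π ∧ GCycle B π' ∧ (∃ ρ, Comp B π ρ) ∧
        (∃ ρ, Comp B π' ρ) ∧ ¬ (π' = π ∨ π' = π⁻¹)) ∨
      ∃ π, GCycle B π ∧ (∃ ρ, Comp B π ρ) ∧
        (∀ π', GCycle B π' → (∃ ρ, Comp B π' ρ) → π' = π ∨ π' = π⁻¹) ∧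
        ((cycleWeight A π = 1 ∧ π.support.card % 4 = 2) ∨
          (cycleWeight A π = -1 ∧ π.support.card % 4 = 0) ∨
          (cycleWeight A π = Complex.I ∨ cycleWeight A π = -Complex.I))) := by
  obtain ⟨τ, τ', hne, hset⟩ := Set.ncard_eq_two.1 h2
  have hτ : MInv B τ := by
    have : τ ∈ {τ : Equiv.Perm V | MInv B τ} := by rw [hset]; simp
    exact this
  have hτ' : MInv B τ' := by
    have : τ' ∈ {τ : Equiv.Perm V | MInv B τ} := by rw [hset]; simp
    exact this
  obtain ⟨π, hπ, hn, hi⟩ := exists_near_of_ne hM hτ hτ' hne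
  have hu := indep_unique hset hπ hn
  have heven : ∀ π ρ : Equiv.Perm V, Comp B π ρ → Even π.support.card := by
    intro π ρ hρ
    obtain ⟨k, hk, -⟩ := hρ.sign
    have := hτ.sign.1
    rw [hk, Nat.even_add] at this
    exact this.2 (even_two_mul k)
  -- the condition on the unique independent cycle, evaluated for the real cycle
  have hcond : ∀ ρ, Comp B π₁ ρ → (A.det.re ≠ 0 ↔
      (cycleWeight A π₁ = 1 ∧ π₁.support.card % 4 = 2) ∨
        (cycleWeight A π₁ = -1 ∧ π₁.support.card % 4 = 0)) := by
    intro ρ hρ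
    have hev := heven _ _ hρ
    rw [h.re_det_two hA hM hρ h2 hev]
    obtain ⟨l, hl⟩ := hev
    have e2 : π₁.support.card / 2 = l := by omega
    rw [e2, hl]
    have n1 : (1 : ℂ) ≠ -1 := by norm_num
    rcases Nat.even_or_odd l with hl' | hl'
    · rw [hl'.neg_one_pow]
      obtain ⟨q, rfl⟩ := hl'
      have q0 : (q + q + (q + q)) % 4 = 0 := by omega
      rcases h.real with e | e <;> rw [e, q0] <;> norm_num
    · rw [hl'.neg_one_pow]
      obtain ⟨q, rfl⟩ := hl'
      have q0 : (2 * q + 1 + (2 * q + 1)) % 4 = 2 := by omega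
      rcases h.real with e | e <;> rw [e, q0] <;> norm_num
  have hni : ∀ w : ℂ, (w = 1 ∨ w = -1) → ¬ (w = Complex.I ∨ w = -Complex.I) := by
    intro w h1 h2
    have him : w.im = 0 := by rcases h1 with h1 | h1 <;> rw [h1] <;> simp
    rcases h2 with h2 | h2 <;> rw [h2] at him <;> simp at him
  by_cases hi1 : ∃ ρ, Comp B π₁ ρ
  · obtain ⟨ρ, hρ⟩ := hi1
    rw [hcond ρ hρ]
    have hu1 := hu π₁ h.cyc ⟨ρ, hρ⟩
    constructor
    · intro hc
      right
      refine ⟨π₁, h.cyc, ⟨ρ, hρ⟩, ?_, hc.imp_right Or.inl⟩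
      intro π' hπ' hi'
      rcases hu1 with rfl | rfl
      · exact hu π' hπ' hi'
      · rw [inv_inv]
        exact (hu π' hπ' hi').symm
    · rintro (⟨σ, σ', hσ, hσ', hiσ, hiσ', hno⟩ | ⟨σ, hσ, hiσ, hσu, hc⟩)
      · exfalso
        apply hno
        rcases hu σ hσ hiσ with rfl | rfl
        · exact hu σ' hσ' hiσ'
        · rw [inv_inv]
          exact (hu σ' hσ' hiσ').symm
      · have hw : cycleWeight A π₁ = cycleWeight A σ ∧ π₁.support.card = σ.support.card := by
          rcases hσu π₁ h.cyc ⟨ρ, hρ⟩ with rfl | rfl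
          · exact ⟨rfl, rfl⟩
          · have := h.inv_weight hA
            rw [inv_inv] at this
            exact ⟨this.symm, by rw [Equiv.Perm.support_inv]⟩
        rw [← hw.1, ← hw.2] at hc
        rcases hc with hc | hc | hc
        · exact Or.inl hc
        · exact Or.inr hc
        · exact absurd hc (hni _ h.real)
  · have hdet : A.det.re ≠ 0 := by
      rw [h.re_det_of_not_indep hA hM hi1, h2]
      rcases neg_one_pow_eq_or ℝ (Fintype.card V / 2) with e | e <;> rw [e] <;> norm_num
    refine iff_of_true hdet (Or.inr ⟨π, hπ, hi, hu, Or.inr (Or.inr ?_)⟩)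
    refine h.imag π hπ ?_ ?_
    · rintro rfl
      exact hi1 hi
    · intro he
      exact hi1 (exists_comp_of_eq_or_inv hi (Or.inr he))

/-- Three perfect matchings give two distinct independent cycles. -/
theorem two_indep_of_three (hM : CyclesMeet B) (h3 : 2 < matchCount B) :
    ∃ π π', GCycle B π ∧ GCycle B π' ∧ (∃ ρ, Comp B π ρ) ∧
        (∃ ρ, Comp B π' ρ) ∧ ¬ (π' = π ∨ π' = π⁻¹) := by
  obtain ⟨τ₁, τ₂, τ₃, h1, h2, h3, h12, h13, h23⟩ :=
    (Set.two_lt_ncard_iff (Set.toFinite _)).1 h3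
  obtain ⟨π, hπ, hn, hi⟩ := exists_near_of_ne hM h1 h2 h12
  obtain ⟨π', hπ', hn', hi'⟩ := exists_near_of_ne hM h1 h3 h13
  refine ⟨π, π', hπ, hπ', hi, hi', ?_⟩
  rintro (rfl | rfl)
  · exact h23 (hn.matching_unique hn')
  · have := hn'.inv
    rw [inv_inv] at this
    exact h23 (hn.matching_unique this)

theorem OneReal.core (hA : ThreeColored B A) (hM : CyclesMeet B) {π₁ : Equiv.Perm V}
    (h : OneReal B A π₁) :
    A.det ≠ 0 ↔ (∃! τ, MInv B τ) ∨
      ((∃ τ τ', MInv B τ ∧ MInv B τ' ∧ τ ≠ τ') ∧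
        ((∃ π π', GCycle B π ∧ GCycle B π' ∧ (∃ ρ, Comp B π ρ) ∧
            (∃ ρ, Comp B π' ρ) ∧ ¬ (π' = π ∨ π' = π⁻¹)) ∨
          ∃ π, GCycle B π ∧ (∃ ρ, Comp B π ρ) ∧
            (∀ π', GCycle B π' → (∃ ρ, Comp B π' ρ) → π' = π ∨ π' = π⁻¹) ∧
            ((cycleWeight A π = 1 ∧ π.support.card % 4 = 2) ∨
              (cycleWeight A π = -1 ∧ π.support.card % 4 = 0) ∨
              (cycleWeight A π = Complex.I ∨ cycleWeight A π = -Complex.I)))) ∨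
      ((¬ ∃ τ, MInv B τ) ∧ ∃ π, GCycle B π ∧ (∃ ρ, Comp B π ρ) ∧ Odd π.support.card ∧
        (cycleWeight A π = 1 ∨ cycleWeight A π = -1)) := by
  rw [det_ne_zero_iff hA]
  by_cases h0 : ∃ τ, MInv B τ
  · have hpos : matchCount B ≠ 0 := by
      rw [matchCount, Ne, Set.ncard_eq_zero (Set.toFinite _)]
      exact Set.Nonempty.ne_empty h0
    by_cases h1 : ∃! τ, MInv B τ
    · have hm : matchCount B = 1 := by
        obtain ⟨τ, hτ, hu⟩ := h1
        rw [matchCount, Set.ncard_eq_one]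
        refine ⟨τ, ?_⟩
        ext μ
        exact ⟨fun hμ => hu μ hμ, fun hμ => by rw [Set.mem_singleton_iff.1 hμ]; exact hτ⟩
      exact iff_of_true (h.core_ne_two hA hM hpos (by omega)) (Or.inl h1)
    · have hm : ∃ τ τ', MInv B τ ∧ MInv B τ' ∧ τ ≠ τ' := by
        by_contra hcon
        push Not at hcon
        obtain ⟨τ, hτ⟩ := h0
        exact h1 ⟨τ, hτ, fun μ hμ => hcon μ τ hμ hτ⟩
      simp only [h1, h0, hm, true_and, false_and, false_or, or_false, not_true_eq_false]
      by_cases h2 : matchCount B = 2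
      · exact h.core_two hA hM h2
      · refine iff_of_true (h.core_ne_two hA hM hpos h2) (Or.inl (two_indep_of_three hM ?_))
        obtain ⟨τ, τ', hτ, hτ', hne⟩ := hm
        have : 1 < matchCount B :=
          (Set.one_lt_ncard_iff (Set.toFinite _)).2 ⟨τ, τ', hτ, hτ', hne⟩
        omega
  · rw [h.core_zero hA hM h0]
    constructor
    · intro hc
      exact Or.inr (Or.inr ⟨h0, hc⟩)
    · rintro (hc | hc | hc)
      · exact absurd hc.exists h0
      · obtain ⟨⟨τ, -, hτ, -⟩, -⟩ := hc
        exact absurd ⟨τ, hτ⟩ h0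
      · exact hc.2

end Core

/-! ### Translation between walks and permutations -/

theorem sameCycle_comm {V : Type*} [DecidableEq V] {B : SimpleGraph V} {u v : V}
    {c : B.Walk u u} {d : B.Walk v v} : SameCycle c d ↔ SameCycle d c :=
  eq_comm

section Translation
variable {V : Type*} [Fintype V] [DecidableEq V] {B : SimpleGraph V} {A : Matrix V V ℂ}

theorem existsUnique_pm_iff : (∃! M, IsPM B M) ↔ ∃! τ, MInv B τ := by
  constructor
  · rintro ⟨M, hM, hu⟩
    obtain ⟨τ, hτ, rfl⟩ := exists_minv hM
    exact ⟨τ, hτ, fun μ hμ => pmOf_inj hμ hτ (hu _ (isPM_pmOf hμ))⟩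
  · rintro ⟨τ, hτ, hu⟩
    refine ⟨pmOf τ, isPM_pmOf hτ, fun M hM => ?_⟩
    obtain ⟨μ, hμ, rfl⟩ := exists_minv hM
    rw [hu μ hμ]

theorem two_pm_iff : (∃ M M', IsPM B M ∧ IsPM B M' ∧ M ≠ M') ↔
    ∃ τ τ', MInv B τ ∧ MInv B τ' ∧ τ ≠ τ' := by
  constructor
  · rintro ⟨M, M', hM, hM', hne⟩
    obtain ⟨τ, hτ, rfl⟩ := exists_minv hM
    obtain ⟨τ', hτ', rfl⟩ := exists_minv hM'
    exact ⟨τ, τ', hτ, hτ', fun h => hne (by rw [h])⟩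
  · rintro ⟨τ, τ', hτ, hτ', hne⟩
    exact ⟨pmOf τ, pmOf τ', isPM_pmOf hτ, isPM_pmOf hτ', fun h => hne (pmOf_inj hτ hτ' h)⟩

theorem two_indep_iff : (∃ (u v : V) (c : B.Walk u u) (d : B.Walk v v), c.IsCycle ∧ d.IsCycle ∧
      IsIndep B c ∧ IsIndep B d ∧ ¬ SameCycle c d) ↔
    ∃ π π', GCycle B π ∧ GCycle B π' ∧ (∃ ρ, Comp B π ρ) ∧ (∃ ρ, Comp B π' ρ) ∧
      ¬ (π' = π ∨ π' = π⁻¹) := by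
  constructor
  · rintro ⟨u, v, c, d, hc, hd, hic, hid, hne⟩
    obtain ⟨π, hπ⟩ := exists_rep_of_walk hc
    obtain ⟨π', hπ'⟩ := exists_rep_of_walk hd
    exact ⟨π, π', hπ.perm, hπ'.perm, hπ.isIndep_iff.1 hic, hπ'.isIndep_iff.1 hid,
      fun h => hne ((hπ.sameCycle_iff hπ').2 h)⟩
  · rintro ⟨π, π', hπ, hπ', hi, hi', hne⟩
    obtain ⟨u, c, hc⟩ := exists_rep_of_perm hπ
    obtain ⟨v, d, hd⟩ := exists_rep_of_perm hπ'
    exact ⟨u, v, c, d, hc.walk, hd.walk, hc.isIndep_iff.2 hi, hd.isIndep_iff.2 hi',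
      fun h => hne ((hc.sameCycle_iff hd).1 h)⟩

theorem Traverses.weight_eq {u : V} {c : B.Walk u u} {π : Equiv.Perm V} (h : Traverses c π)
    (A : Matrix V V ℂ) : walkWeight A c = cycleWeight A π :=
  h.weight A

theorem unique_indep_iff (P : ℂ → ℕ → Prop) : (∃ (u : V) (Γ : B.Walk u u), Γ.IsCycle ∧
      IsIndep B Γ ∧ (∀ (v : V) (d : B.Walk v v), d.IsCycle → IsIndep B d → SameCycle d Γ) ∧
      P (walkWeight A Γ) Γ.length) ↔
    ∃ π, GCycle B π ∧ (∃ ρ, Comp B π ρ) ∧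
      (∀ π', GCycle B π' → (∃ ρ, Comp B π' ρ) → π' = π ∨ π' = π⁻¹) ∧
      P (cycleWeight A π) π.support.card := by
  constructor
  · rintro ⟨u, c, hc, hi, hu, hP⟩
    obtain ⟨π, hπ⟩ := exists_rep_of_walk hc
    rw [hπ.weight_eq, hπ.length] at hP
    refine ⟨π, hπ.perm, hπ.isIndep_iff.1 hi, fun π' hπ' hi' => ?_, hP⟩
    obtain ⟨v, d, hd⟩ := exists_rep_of_perm hπ'
    exact (hπ.sameCycle_iff hd).1 (sameCycle_comm.1 (hu v d hd.walk (hd.isIndep_iff.2 hi')))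
  · rintro ⟨π, hπ, hi, hu, hP⟩
    obtain ⟨u, c, hc⟩ := exists_rep_of_perm hπ
    rw [← hc.weight_eq, ← hc.length] at hP
    refine ⟨u, c, hc.walk, hc.isIndep_iff.2 hi, fun v d hd hid => ?_, hP⟩
    obtain ⟨π', hπ'⟩ := exists_rep_of_walk hd
    exact sameCycle_comm.1 ((hc.sameCycle_iff hπ').2 (hu π' hπ'.perm (hπ'.isIndep_iff.1 hid)))

theorem exists_indep_iff (P : ℂ → ℕ → Prop) : (∃ (u : V) (Γ : B.Walk u u), Γ.IsCycle ∧
      IsIndep B Γ ∧ P (walkWeight A Γ) Γ.length) ↔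
    ∃ π, GCycle B π ∧ (∃ ρ, Comp B π ρ) ∧ P (cycleWeight A π) π.support.card := by
  constructor
  · rintro ⟨u, c, hc, hi, hP⟩
    obtain ⟨π, hπ⟩ := exists_rep_of_walk hc
    rw [hπ.weight_eq, hπ.length] at hP
    exact ⟨π, hπ.perm, hπ.isIndep_iff.1 hi, hP⟩
  · rintro ⟨π, hπ, hi, hP⟩
    obtain ⟨u, c, hc⟩ := exists_rep_of_perm hπ
    rw [← hc.weight_eq, ← hc.length] at hP
    exact ⟨u, c, hc.walk, hc.isIndep_iff.2 hi, hP⟩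

theorem cyclesMeet_of_theta (hB : Bicyclic V B) (hθ : ThetaType B) : CyclesMeet B := by
  intro π π' hπ hπ'
  obtain ⟨u, c, hc⟩ := exists_rep_of_perm hπ
  obtain ⟨v, d, hd⟩ := exists_rep_of_perm hπ'
  obtain ⟨z, hz, hz'⟩ := cycles_meet hB hθ hc.walk hd.walk
  exact ⟨z, (hc.supp z).2 hz, (hd.supp z).2 hz'⟩

end Translation

/-- Characterization of non-singular θ-type bicyclic 3-colored
digraphs in which exactly one cycle has weight `±1` and the other two have
weight `±i`. -/
theorem stmt11 {V : Type*} [Fintype V] [DecidableEq V] (B : SimpleGraph V)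
    (A : Matrix V V ℂ) (hA : ThreeColored B A) (hB : Bicyclic V B)
    (hθ : ThetaType B)
    (hexc : ∃ (u : V) (Γ₁ : B.Walk u u), Γ₁.IsCycle ∧
      walkWeight A Γ₁ ∈ ({1, -1} : Set ℂ) ∧
      ∀ (v : V) (d : B.Walk v v), d.IsCycle → ¬ SameCycle d Γ₁ →
        walkWeight A d ∈ ({Complex.I, -Complex.I} : Set ℂ)) :
    A.det ≠ 0 ↔
      ((∃! M, IsPM B M) ∨
       ((∃ M M', IsPM B M ∧ IsPM B M' ∧ M ≠ M') ∧
         ((∃ (u v : V) (c : B.Walk u u) (d : B.Walk v v), c.IsCycle ∧ d.IsCycle ∧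
             IsIndep B c ∧ IsIndep B d ∧ ¬ SameCycle c d) ∨
          (∃ (u : V) (Γ : B.Walk u u), Γ.IsCycle ∧ IsIndep B Γ ∧
            (∀ (v : V) (d : B.Walk v v), d.IsCycle → IsIndep B d → SameCycle d Γ) ∧
            ((walkWeight A Γ = 1 ∧ Γ.length % 4 = 2) ∨
             (walkWeight A Γ = -1 ∧ Γ.length % 4 = 0) ∨
             walkWeight A Γ ∈ ({Complex.I, -Complex.I} : Set ℂ))))) ∨
       (¬ HasPM B ∧ ∃ (u : V) (Γ : B.Walk u u), Γ.IsCycle ∧ IsIndep B Γ ∧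
          Odd Γ.length ∧ walkWeight A Γ ∈ ({1, -1} : Set ℂ))) := by
  obtain ⟨u, Γ₁, hΓ, hw, hoth⟩ := hexc
  obtain ⟨π₁, hπ₁⟩ := exists_rep_of_walk hΓ
  have h : OneReal B A π₁ := by
    refine ⟨hπ₁.perm, ?_, fun π hπ h1 h2 => ?_⟩
    · rw [← hπ₁.weight_eq]
      exact hw
    · obtain ⟨v, d, hd⟩ := exists_rep_of_perm hπ
      rw [← hd.weight_eq]
      refine hoth v d hd.walk fun hs => ?_
      rcases (hπ₁.sameCycle_iff hd).1 (sameCycle_comm.1 hs) with e | e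
      · exact h1 e
      · exact h2 e
  rw [h.core hA (cyclesMeet_of_theta hB hθ), existsUnique_pm_iff, two_pm_iff, two_indep_iff,
    hasPM_iff,
    unique_indep_iff (B := B) (A := A) (fun w k => (w = 1 ∧ k % 4 = 2) ∨ (w = -1 ∧ k % 4 = 0) ∨
      w ∈ ({Complex.I, -Complex.I} : Set ℂ)),
    exists_indep_iff (B := B) (A := A) (fun w k => Odd k ∧ w ∈ ({1, -1} : Set ℂ))]
  rfl
end

section
/- Let (U, A) be a 3-colored digraph where U is a connected unicyclic graph whose unique cycle has weight in {i, −i}, and suppose det A ≠ 0. Then every diagonal entry of A⁻¹ is zero. -/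
/-!
The matrix `A` is conjugate, by a diagonal matrix `D` with entries `±1`, to `-A` or to `-Aᵀ`.
Since `D = D⁻¹`, taking inverses gives `D A⁻¹ D = -A⁻¹` or `D A⁻¹ D = -(A⁻¹)ᵀ`, and comparing
diagonal entries gives `A⁻¹ v v = -A⁻¹ v v` (`inv_diag_eq_zero`).

On edges the required equation reads `d u * d v = g u v`, where `g u v = -1` for the target `-A`
and `g u v = -(A u v)²` for the target `-Aᵀ`; in both cases `g` is symmetric with values `±1`. Such
a `d` exists on a spanning tree (`exists_potential`), and there is only one edge outside the tree
(`card_eq_one_diff`). At that edge the equation says that the product of `g` around the unique cycle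
`c` is `1`. This product is `(-1) ^ |c|` in the first case and `(-1) ^ |c| * w(c)²` in the second.
As `w(c)² = -1`, the first choice works when the cycle is even, the second when it is odd.
-/

open SimpleGraph

theorem walkWeight_nil {V : Type*} {G : SimpleGraph V} (g : Matrix V V ℂ) (u : V) :
    walkWeight g (Walk.nil : G.Walk u u) = 1 := by
  simp [walkWeight]

theorem walkWeight_cons {V : Type*} {G : SimpleGraph V} (g : Matrix V V ℂ) {u v w : V}
    (h : G.Adj u v) (p : G.Walk v w) :
    walkWeight g (Walk.cons h p) = g u v * walkWeight g p := by
  simp [walkWeight]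

theorem walkWeight_concat {V : Type*} {G : SimpleGraph V} (g : Matrix V V ℂ) {u v w : V}
    (p : G.Walk u v) (h : G.Adj v w) :
    walkWeight g (p.concat h) = walkWeight g p * g v w := by
  simp [walkWeight, Walk.darts_concat]

theorem walkWeight_mapLe {V : Type*} {G H : SimpleGraph V} (hle : G ≤ H) (g : Matrix V V ℂ)
    {u v : V} (p : G.Walk u v) : walkWeight g (p.mapLe hle) = walkWeight g p := by
  induction p with
  | nil => rfl
  | cons h p ih =>
    rw [walkWeight_cons, ← ih]
    exact walkWeight_cons g (hle h) (p.mapLe hle)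

theorem walkWeight_sq {V : Type*} {G : SimpleGraph V} (g : Matrix V V ℂ)
    (hg : ∀ u v, G.Adj u v → g u v ^ 2 = 1) {u v : V} (p : G.Walk u v) :
    walkWeight g p ^ 2 = 1 := by
  induction p with
  | nil => simp [walkWeight_nil]
  | cons h p ih => rw [walkWeight_cons, mul_pow, ih, hg _ _ h, one_mul]

theorem walkWeight_neg_one {V : Type*} {G : SimpleGraph V} {u v : V} (p : G.Walk u v) :
    walkWeight (Matrix.of fun _ _ => (-1 : ℂ)) p = (-1) ^ p.length := by
  induction p with
  | nil => simp [walkWeight_nil]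
  | cons h p ih => rw [walkWeight_cons, ih, Walk.length_cons, pow_succ', Matrix.of_apply]

theorem walkWeight_neg_sq {V : Type*} {G : SimpleGraph V} (A : Matrix V V ℂ) {u v : V}
    (p : G.Walk u v) :
    walkWeight (Matrix.of fun x y => -(A x y) ^ 2) p = (-1) ^ p.length * walkWeight A p ^ 2 := by
  induction p with
  | nil => simp [walkWeight_nil]
  | cons h p ih =>
    rw [walkWeight_cons, walkWeight_cons, ih, Walk.length_cons, Matrix.of_apply]
    ring

/-- A symmetric `±1`-valued function on the edges of a tree is a coboundary: `d v` is the product of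
the values along the path from a fixed root to `v`. -/
theorem exists_potential {V : Type*} {T : SimpleGraph V} (hT : T.IsTree) (g : Matrix V V ℂ)
    (hsymm : ∀ u v, T.Adj u v → g u v = g v u) (hg : ∀ u v, T.Adj u v → g u v ^ 2 = 1) :
    ∃ d : V → ℂ, (∀ v, d v ^ 2 = 1) ∧ ∀ u v, T.Adj u v → d u * d v = g u v := by
  obtain ⟨r⟩ := hT.connected.nonempty
  choose P hP _ using hT.existsUnique_path r
  have key : ∀ u v, T.Adj u v → u ∈ (P v).support →
      walkWeight g (P u) * walkWeight g (P v) = g u v := by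
    intro u v huv hu
    rw [hT.isAcyclic.path_concat (hP u) (hP v) huv hu, walkWeight_concat]
    linear_combination g u v * walkWeight_sq g hg (P u)
  refine ⟨fun v => walkWeight g (P v), fun v => walkWeight_sq g hg _, fun u v huv => ?_⟩
  by_cases hu : u ∈ (P v).support
  · exact key u v huv hu
  · have hv : v ∈ (P u).support :=
      hT.isAcyclic.mem_support_of_ne_mem_support_of_adj_of_isPath (hP u) (hP v) huv hu
    rw [hsymm u v huv, ← key v u huv.symm hv, mul_comm]

theorem walkWeight_eq_of_potential {V : Type*} {T : SimpleGraph V} (g : Matrix V V ℂ)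
    (d : V → ℂ) (hd : ∀ v, d v ^ 2 = 1) (hdg : ∀ u v, T.Adj u v → d u * d v = g u v)
    {a b : V} (p : T.Walk a b) : walkWeight g p = d a * d b := by
  induction p with
  | nil => rw [walkWeight_nil, ← sq, hd]
  | @cons u v w h p ih =>
    rw [walkWeight_cons, ih, ← hdg _ _ h]
    linear_combination d u * d w * hd v

/-- A unicyclic graph has exactly one edge outside any spanning tree. -/
theorem card_eq_one_diff {V : Type*} [Fintype V] {U T : SimpleGraph V} (hU : Unicyclic V U)
    (hle : T ≤ U) (hT : T.IsTree) : (U.edgeSet \ T.edgeSet).ncard = 1 := by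
  classical
  have h1 := hT.card_edgeFinset
  have h2 : T.edgeSet.ncard = T.edgeFinset.card := by
    rw [Set.ncard_eq_toFinset_card', edgeFinset]
  have h3 := Set.ncard_sdiff_add_ncard_of_subset (edgeSet_mono hle) (Set.toFinite _)
  have h4 := hU.2
  omega

/-- The sign-conjugation principle: if conjugation by a `±1` diagonal matrix sends `A` to `-A` or to
`-Aᵀ`, the diagonal of `A⁻¹` vanishes. -/
theorem inv_diag_eq_zero {V : Type*} [Fintype V] [DecidableEq V] (A : Matrix V V ℂ)
    (hdet : A.det ≠ 0) (d : V → ℂ) (hd : ∀ v, d v ^ 2 = 1)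
    (h : (∀ u v, d u * A u v * d v = -A u v) ∨ (∀ u v, d u * A u v * d v = -A v u)) (v : V) :
    A⁻¹ v v = 0 := by
  have hDD : Matrix.diagonal d * Matrix.diagonal d = 1 := by
    rw [Matrix.diagonal_mul_diagonal, ← Matrix.diagonal_one]
    congr 1
    funext x
    rw [← sq, hd]
  have hDinv : (Matrix.diagonal d)⁻¹ = Matrix.diagonal d := Matrix.inv_eq_left_inv hDD
  have hunit : IsUnit A.det := isUnit_iff_ne_zero.2 hdet
  have hneg : ∀ B : Matrix V V ℂ, IsUnit B.det → (-B)⁻¹ = -B⁻¹ := fun B hB =>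
    Matrix.inv_eq_left_inv (by rw [neg_mul_neg, Matrix.nonsing_inv_mul _ hB])
  have hconj : (Matrix.diagonal d * A * Matrix.diagonal d)⁻¹ v v = A⁻¹ v v := by
    rw [Matrix.mul_inv_rev, Matrix.mul_inv_rev, hDinv, Matrix.diagonal_mul, Matrix.mul_diagonal]
    linear_combination A⁻¹ v v * hd v
  have hzero : A⁻¹ v v = -A⁻¹ v v := by
    rcases h with h | h
    · have hB : Matrix.diagonal d * A * Matrix.diagonal d = -A := by
        ext x y
        rw [Matrix.mul_diagonal, Matrix.diagonal_mul, h, Matrix.neg_apply]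
      rw [hB, hneg A hunit] at hconj
      exact hconj.symm
    · have hB : Matrix.diagonal d * A * Matrix.diagonal d = -A.transpose := by
        ext x y
        rw [Matrix.mul_diagonal, Matrix.diagonal_mul, h, Matrix.neg_apply, Matrix.transpose_apply]
      rw [hB, hneg _ (by rwa [Matrix.det_transpose]), ← Matrix.transpose_nonsing_inv] at hconj
      exact hconj.symm
  exact self_eq_neg.1 hzero


/-- For a non-singular connected unicyclic 3-colored digraph whose
unique cycle has weight `±i`, every diagonal entry of `A⁻¹` is zero. -/
theorem stmt12 {V : Type*} [Fintype V] [DecidableEq V] (U : SimpleGraph V)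
    (A : Matrix V V ℂ) (hA : ThreeColored U A) (hU : Unicyclic V U)
    (hcyc : ∀ (u : V) (c : U.Walk u u), c.IsCycle →
      walkWeight A c ∈ ({Complex.I, -Complex.I} : Set ℂ))
    (hdet : A.det ≠ 0) :
    ∀ v : V, A⁻¹ v v = 0 := by
  obtain ⟨hherm, hdiag, hedge, hnon⟩ := hA
  obtain ⟨T, hle, hT⟩ := hU.1.exists_isTree_le
  obtain ⟨e, he⟩ := Set.ncard_eq_one.1 (card_eq_one_diff hU hle hT)
  induction e using Sym2.ind with
  | _ a b =>
  have hmem : s(a, b) ∈ U.edgeSet \ T.edgeSet := by rw [he]; rfl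
  have hab : U.Adj a b := hmem.1
  have hnT : ¬ T.Adj a b := hmem.2
  obtain ⟨p, hp, -⟩ := hT.existsUnique_path b a
  -- the unique cycle: the edge outside the tree, closed up by the tree path between its ends
  set c : U.Walk a a := Walk.cons hab (p.mapLe hle) with hc
  have hcycle : c.IsCycle := by
    rw [hc, Walk.cons_isCycle_iff]
    refine ⟨hp.mapLe hle, fun hmem' => hnT ?_⟩
    rw [Walk.edges_mapLe_eq_edges] at hmem'
    exact p.adj_of_mem_edges hmem'
  have hw : walkWeight A c ^ 2 = -1 := by
    rcases hcyc a c hcycle with h | h <;> rw [h] <;> simp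
  -- a sign function on edges with product `1` around the cycle has a potential on all of `U`
  have main : ∀ g : Matrix V V ℂ, (∀ u v, U.Adj u v → g u v = g v u) →
      (∀ u v, U.Adj u v → g u v ^ 2 = 1) → walkWeight g c = 1 →
      ∃ d : V → ℂ, (∀ v, d v ^ 2 = 1) ∧ ∀ u v, U.Adj u v → d u * d v = g u v := by
    intro g hs hg hgc
    obtain ⟨d, hd, hdg⟩ := exists_potential hT g (fun u v h => hs u v (hle h))
      (fun u v h => hg u v (hle h))
    rw [hc, walkWeight_cons, walkWeight_mapLe, walkWeight_eq_of_potential g d hd hdg] at hgc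
    have hdab : d a * d b = g a b := by
      linear_combination g a b * hgc - d a * d b * hg a b hab
    refine ⟨d, hd, fun u v huv => ?_⟩
    by_cases hTuv : T.Adj u v
    · exact hdg u v hTuv
    · have huv' : s(u, v) ∈ U.edgeSet \ T.edgeSet := ⟨huv, hTuv⟩
      rw [he, Set.mem_singleton_iff, Sym2.eq_iff] at huv'
      rcases huv' with ⟨rfl, rfl⟩ | ⟨rfl, rfl⟩
      · exact hdab
      · rw [mul_comm, hdab, hs _ _ hab]
  have hzero : ∀ u v, ¬ U.Adj u v → A u v = 0 := by
    intro u v h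
    by_cases huv : u = v
    · rw [huv, hdiag]
    · exact hnon u v huv h
  have hpow : ∀ u v, U.Adj u v → A u v ^ 4 = 1 := by
    intro u v h
    rcases hedge u v h with h | h | h | h <;> rw [h] <;>
      simp [Even.neg_pow (show Even 4 by decide), Complex.I_pow_four]
  have hcube : ∀ u v, U.Adj u v → A v u = A u v ^ 3 := by
    intro u v h
    rw [← hherm.apply v u]
    rcases hedge u v h with h | h | h | h <;> rw [h] <;> simp [pow_succ]
  intro v
  rcases Nat.even_or_odd c.length with hpar | hpar
  · obtain ⟨d, hd, hdg⟩ := main (Matrix.of fun _ _ => -1) (fun _ _ _ => rfl) (fun _ _ _ => by simp)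
      (by rw [walkWeight_neg_one, hpar.neg_one_pow])
    refine inv_diag_eq_zero A hdet d hd (Or.inl fun x y => ?_) v
    by_cases hxy : U.Adj x y
    · have h := hdg x y hxy
      rw [Matrix.of_apply] at h
      linear_combination A x y * h
    · simp [hzero x y hxy]
  · obtain ⟨d, hd, hdg⟩ := main (Matrix.of fun x y => -(A x y) ^ 2)
      (fun x y h => by
        rw [Matrix.of_apply, Matrix.of_apply, hcube x y h]
        linear_combination A x y ^ 2 * hpow x y h)
      (fun x y h => by rw [Matrix.of_apply]; linear_combination hpow x y h)
      (by rw [walkWeight_neg_sq, hpar.neg_one_pow, hw]; norm_num)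
    refine inv_diag_eq_zero A hdet d hd (Or.inr fun x y => ?_) v
    by_cases hxy : U.Adj x y
    · have h := hdg x y hxy
      rw [Matrix.of_apply] at h
      linear_combination A x y * h + hcube x y hxy
    · simp [hzero x y hxy, hzero y x fun h => hxy h.symm]
end

section
/- Let (G, A) be a 3-colored digraph with det A ≠ 0 such that G has a perfect matching and every cycle of G with an odd number of vertices has weight in {i, −i}. Then every diagonal entry of A⁻¹ is zero. -/
/-!
Up to the factor `det A`, the entry `A⁻¹ v v` is the determinant of `A` with row `v` replaced by
the unit vector at `v`. In its Leibniz expansion a permutation `σ` contributes only if it fixes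
`v` and moves every other vertex along an edge of `G`. A perfect matching forces the number of
vertices to be even, so such a `σ` moves an odd number of vertices and has a cycle of odd length
(`exists_odd_cycle`). Reversing one such cycle (`flipCycle`) keeps the sign of `σ` and replaces the
weight of that cycle by its complex conjugate, which is its negative because the weight is `±i`
(`cycle_weight`). The reversal changes neither the vertex sets of the cycles nor, therefore, the
set of vertices on odd cycles (`oddSet_flipCycle`), so a cycle selected from that set alone is
selected again after the reversal: the reversal is a sign-reversing involution on the nonzero
terms, and the expansion vanishes.
-/

open SimpleGraph

/-! ### Reversing one cycle of a permutation -/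

open Equiv in
/-- The permutation `σ` with the direction of its cycle through `x` reversed. -/
def flipCycle {V : Type*} [Fintype V] [DecidableEq V] (σ : Perm V) (x : V) : Perm V :=
  σ * (σ.cycleOf x)⁻¹ * (σ.cycleOf x)⁻¹

open Equiv in
/-- The vertices lying on a nontrivial cycle of `σ` of odd length. Fixed points are excluded
because `σ.cycleOf y` is then the identity, whose support has cardinality `0`. -/
def oddSet {V : Type*} [Fintype V] [DecidableEq V] (σ : Perm V) : Set V :=
  {y | Odd (σ.cycleOf y).support.card}

section Flip

open Equiv

variable {V : Type*} [Fintype V] [DecidableEq V] (σ : Perm V) (x : V)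

lemma flipCycle_of_sameCycle {y : V} (h : σ.SameCycle x y) : flipCycle σ x y = σ⁻¹ y := by
  have h1 : (σ.cycleOf x)⁻¹ y = σ⁻¹ y := by
    rw [Perm.cycleOf_inv, Perm.SameCycle.cycleOf_apply (Perm.sameCycle_inv.2 h)]
  have h2 : (σ.cycleOf x)⁻¹ (σ⁻¹ y) = σ⁻¹ (σ⁻¹ y) := by
    rw [Perm.cycleOf_inv, Perm.SameCycle.cycleOf_apply]
    exact Perm.sameCycle_inv.2 (Perm.sameCycle_symm_apply_right.2 h)
  rw [flipCycle, Perm.mul_apply, Perm.mul_apply, h1, h2]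
  exact σ.apply_symm_apply _

lemma flipCycle_of_not_sameCycle {y : V} (h : ¬ σ.SameCycle x y) : flipCycle σ x y = σ y := by
  have h1 : (σ.cycleOf x)⁻¹ y = y := by
    rw [Perm.cycleOf_inv, Perm.cycleOf_apply_of_not_sameCycle]
    rwa [Perm.sameCycle_inv]
  simp [flipCycle, Perm.mul_apply, h1]

lemma sign_flipCycle : (flipCycle σ x).sign = σ.sign := by
  simp [flipCycle, mul_assoc]

lemma sameCycle_flipCycle (y z : V) : (flipCycle σ x).SameCycle y z ↔ σ.SameCycle y z := by
  by_cases h : σ.SameCycle x y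
  · have key : ∀ n : ℕ, ((flipCycle σ x) ^ n) y = ((σ⁻¹) ^ n) y := by
      intro n
      induction n with
      | zero => rfl
      | succ n ih =>
        rw [pow_succ', pow_succ', Perm.mul_apply, Perm.mul_apply, ih, flipCycle_of_sameCycle]
        rw [← Perm.sameCycle_inv] at h ⊢
        exact Perm.sameCycle_pow_right.2 h
    rw [← Perm.sameCycle_inv (f := σ)]
    constructor
    · intro hs
      obtain ⟨n, hn⟩ := hs.exists_nat_pow_eq
      exact ⟨n, by rw [zpow_natCast, ← key, hn]⟩
    · intro hs
      obtain ⟨n, hn⟩ := hs.exists_nat_pow_eq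
      exact ⟨n, by rw [zpow_natCast, key, hn]⟩
  · have key : ∀ n : ℕ, ((flipCycle σ x) ^ n) y = (σ ^ n) y := by
      intro n
      induction n with
      | zero => rfl
      | succ n ih =>
        rw [pow_succ', pow_succ', Perm.mul_apply, Perm.mul_apply, ih, flipCycle_of_not_sameCycle]
        rwa [Perm.sameCycle_pow_right]
    constructor
    · intro hs
      obtain ⟨n, hn⟩ := hs.exists_nat_pow_eq
      exact ⟨n, by rw [zpow_natCast, ← key, hn]⟩
    · intro hs
      obtain ⟨n, hn⟩ := hs.exists_nat_pow_eq
      exact ⟨n, by rw [zpow_natCast, key, hn]⟩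

lemma flipCycle_flipCycle : flipCycle (flipCycle σ x) x = σ := by
  ext y
  by_cases h : σ.SameCycle x y
  · rw [flipCycle_of_sameCycle _ _ ((sameCycle_flipCycle σ x x y).2 h), Perm.inv_eq_iff_eq,
      flipCycle_of_sameCycle _ _ (Perm.sameCycle_apply_right.2 h)]
    exact (σ.symm_apply_apply y).symm
  · rw [flipCycle_of_not_sameCycle _ _ (mt (sameCycle_flipCycle σ x x y).1 h),
      flipCycle_of_not_sameCycle _ _ h]

lemma support_flipCycle : (flipCycle σ x).support = σ.support := by
  ext y
  rw [Perm.mem_support, Perm.mem_support]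
  by_cases h : σ.SameCycle x y
  · rw [flipCycle_of_sameCycle _ _ h, Ne, Perm.inv_eq_iff_eq, eq_comm]
  · rw [flipCycle_of_not_sameCycle _ _ h]

lemma oddSet_flipCycle : oddSet (flipCycle σ x) = oddSet σ := by
  ext y
  have : ((flipCycle σ x).cycleOf y).support = (σ.cycleOf y).support := by
    ext z
    rw [Perm.mem_support_cycleOf_iff, Perm.mem_support_cycleOf_iff, sameCycle_flipCycle,
      support_flipCycle]
  simp [oddSet, this]

variable {σ x}

lemma mem_support_of_mem_oddSet (h : x ∈ oddSet σ) : x ∈ σ.support := by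
  by_contra hx
  have : σ.cycleOf x = 1 := (Perm.cycleOf_eq_one_iff _).2 (by simpa using hx)
  simp [oddSet, this] at h

lemma exists_odd_cycle (h : Odd σ.support.card) : (oddSet σ).Nonempty := by
  by_contra hne
  rw [← Nat.not_even_iff_odd, ← Perm.sum_cycleType, Perm.cycleType_def] at h
  refine h (Finset.even_sum _ fun c hc => ?_)
  obtain ⟨y, hy⟩ := (Perm.mem_cycleFactorsFinset_iff.1 hc).1.nonempty_support
  by_contra hodd
  refine hne ⟨y, ?_⟩
  rw [oddSet, Set.mem_ofPred_eq, ← Perm.cycle_is_cycleOf hy hc]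
  exact Nat.not_even_iff_odd.1 hodd

end Flip

/-! ### Cycles of permutations as cycles of the graph -/

section Weights

open Equiv

/-- The walk `x, σ x, …, σⁿ x` in `G`, with its support and weight. -/
lemma exists_orbit_walk_s13 {V : Type*} {G : SimpleGraph V} {A : Matrix V V ℂ}
    (σ : Perm V) (n : ℕ) (x : V)
    (h : ∀ y, σ.SameCycle x y → G.Adj y (σ y)) :
    ∃ p : G.Walk x (σ^[n] x), p.support = List.iterate σ x (n + 1) ∧
      walkWeight A p = ((List.iterate σ x n).map fun y => A y (σ y)).prod := by
  induction n generalizing x with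
  | zero => exact ⟨.nil, by simp, by simp [walkWeight]⟩
  | succ n ih =>
    obtain ⟨p, hp, hw⟩ := ih (σ x) fun y hy => h y (Perm.sameCycle_apply_left.1 hy)
    refine ⟨.cons (h x .rfl) p, ?_, ?_⟩
    · exact congrArg (List.cons x) hp
    · exact congrArg (A x (σ x) * ·) hw

variable {V : Type*} [Fintype V] [DecidableEq V] {G : SimpleGraph V} {A : Matrix V V ℂ}

/-- An odd cycle of `σ` all of whose steps are edges is an odd cycle of `G`: its length is at
least `3`, since it is odd and not `1`. -/
lemma cycle_weight (hodd : ∀ (u : V) (c : G.Walk u u), c.IsCycle → Odd c.length →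
      walkWeight A c ∈ ({Complex.I, -Complex.I} : Set ℂ)) (σ : Perm V) (x : V)
    (hx : x ∈ oddSet σ) (h : ∀ y, σ.SameCycle x y → G.Adj y (σ y)) :
    ∏ y ∈ (σ.cycleOf x).support, A y (σ y) ∈ ({Complex.I, -Complex.I} : Set ℂ) := by
  have hxs := mem_support_of_mem_oddSet hx
  have hx' : Odd (σ.cycleOf x).support.card := hx
  obtain ⟨p, hp, hw⟩ := exists_orbit_walk_s13 (A := A) σ (σ.cycleOf x).support.card x h
  have hcl : σ^[(σ.cycleOf x).support.card] x = x := by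
    rw [Perm.iterate_eq_pow, ← Perm.pow_mod_card_support_cycleOf_self_apply, Nat.mod_self]
    rfl
  have hlen : p.length = (σ.cycleOf x).support.card := by
    have := congrArg List.length hp
    simpa using this
  have hprod : ∏ y ∈ (σ.cycleOf x).support, A y (σ y) = walkWeight A p := by
    rw [hw]
    refine Eq.trans ?_ (List.prod_toFinset _ (Perm.nodup_toList σ x))
    refine Finset.prod_congr ?_ fun _ _ => rfl
    ext y
    rw [List.mem_toFinset, Perm.mem_support_cycleOf_iff]
    exact Perm.mem_toList_iff.symm
  rw [hprod]
  have h3 : 3 ≤ (σ.cycleOf x).support.card := by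
    have h2 := Perm.two_le_card_support_cycleOf_iff.2 (Perm.mem_support.1 hxs)
    rcases hx' with ⟨k, hk⟩
    omega
  have htail : p.support.tail.Nodup := by
    have := Perm.nodup_toList σ (σ x)
    rw [Perm.toList, Perm.cycleOf_self_apply] at this
    rw [hp]
    exact this
  clear hprod hp hw
  revert p
  rw [hcl]
  intro p hlen htail
  refine hodd x p ?_ (hlen ▸ hx')
  rw [Walk.isCycle_iff_isPath_tail_and_le_length]
  refine ⟨?_, by omega⟩
  have hnil : ¬ p.Nil := by
    rw [← Walk.length_eq_zero_iff]
    omega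
  rw [Walk.isPath_def, Walk.support_tail_of_not_nil _ hnil]
  exact htail

/-- Each vertex lies in exactly one matching edge and each edge has two ends. -/
lemma even_card_of_hasPM (h : HasPM G) : Even (Fintype.card V) := by
  obtain ⟨M, hM, hv⟩ := h
  have h1 : Fintype.card V = ∑ v : V, (M.filter fun e => v ∈ e).card := by simp [hv]
  have h2 := Finset.sum_card_bipartiteAbove_eq_sum_card_bipartiteBelow
    (s := (Finset.univ : Finset V)) (t := M) (fun v e => v ∈ e)
  simp only [Finset.bipartiteAbove, Finset.bipartiteBelow] at h2
  rw [h1, h2]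
  refine Finset.even_sum _ fun e he => ?_
  have hd := G.not_isDiag_of_mem_edgeSet (hM e he)
  have : (Finset.univ.filter fun v => v ∈ e) = e.toFinset := by
    ext
    simp
  rw [this, Sym2.card_toFinset_of_not_isDiag e hd]
  exact even_two

end Weights

/-! ### The sign-reversing involution -/

open Equiv in
/-- Reversing an odd cycle of `σ` negates the Leibniz term of `σ`, for `A` with
row `v` replaced by the unit vector at `v`. The cycle avoids `v`, which is a fixed point of `σ`. -/
lemma term_flipCycle {V : Type*} [Fintype V] [DecidableEq V] {G : SimpleGraph V}
    {A : Matrix V V ℂ} (hA : ThreeColored G A)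
    (hodd : ∀ (u : V) (c : G.Walk u u), c.IsCycle → Odd c.length →
      walkWeight A c ∈ ({Complex.I, -Complex.I} : Set ℂ))
    (v : V) (σ : Perm V) (x : V) (hx : x ∈ oddSet σ) (hv : σ v = v) :
    ∏ i, (A.updateRow v (Pi.single v 1)) (flipCycle σ x i) i =
      - ∏ i, (A.updateRow v (Pi.single v 1)) (σ i) i := by
  obtain ⟨hH, hdiag, -, hnon⟩ := hA
  have hconj : ∀ a b, A a b = star (A b a) := fun a b => (hH.apply a b).symm
  have hxs := mem_support_of_mem_oddSet hx
  set S := (σ.cycleOf x).support with hS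
  have hmem : ∀ y, y ∈ S ↔ σ.SameCycle x y := fun y => by
    rw [hS, Perm.mem_support_cycleOf_iff, and_iff_left hxs]
  have hvS : ∀ y ∈ S, y ≠ v := by
    rintro y hy rfl
    rw [hmem] at hy
    exact Perm.mem_support.1 (hy.mem_support_iff.1 hxs) hv
  have hσS : ∀ y, y ∈ S ↔ σ y ∈ S := fun y => by
    rw [hmem, hmem, Perm.sameCycle_apply_right]
  have hout : ∏ i ∈ Sᶜ, (A.updateRow v (Pi.single v 1)) (flipCycle σ x i) i =
      ∏ i ∈ Sᶜ, (A.updateRow v (Pi.single v 1)) (σ i) i := by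
    refine Finset.prod_congr rfl fun i hi => ?_
    rw [Finset.mem_compl, hmem] at hi
    rw [flipCycle_of_not_sameCycle _ _ hi]
  have hin1 : ∏ i ∈ S, (A.updateRow v (Pi.single v 1)) (σ i) i =
      star (∏ i ∈ S, A i (σ i)) := by
    rw [star_prod]
    refine Finset.prod_congr rfl fun i hi => ?_
    rw [Matrix.updateRow_ne (hvS _ ((hσS i).1 hi)), hconj]
  -- Reindexing by `σ`: the reversed cycle traverses the same edges in the opposite direction.
  have hin2 : ∏ i ∈ S, (A.updateRow v (Pi.single v 1)) (flipCycle σ x i) i =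
      ∏ i ∈ S, A i (σ i) := by
    symm
    refine Finset.prod_equiv σ hσS fun i hi => ?_
    rw [flipCycle_of_sameCycle _ _ ((hmem _).1 ((hσS i).1 hi)),
      show σ⁻¹ (σ i) = i from σ.symm_apply_apply i, Matrix.updateRow_ne (hvS i hi)]
  have hw : ∏ i ∈ S, A i (σ i) = - star (∏ i ∈ S, A i (σ i)) := by
    by_cases hadj : ∀ y, σ.SameCycle x y → G.Adj y (σ y)
    · rcases cycle_weight hodd σ x hx hadj with h | h <;>
        rw [hS, h] <;> simp
    · push Not at hadj
      obtain ⟨y, hy, hna⟩ := hadj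
      have h0 : A y (σ y) = 0 := by
        by_cases he : y = σ y
        · rw [← he, hdiag]
        · exact hnon _ _ he hna
      rw [Finset.prod_eq_zero ((hmem y).2 hy) h0]
      simp
  rw [← Finset.prod_mul_prod_compl S, ← Finset.prod_mul_prod_compl S, hout, hin1, hin2,
    ← neg_mul, ← hw]


/-- For a non-singular 3-colored digraph with a perfect matching in
which every odd cycle has weight `±i`, every diagonal entry of `A⁻¹` is zero. -/
theorem stmt13 {V : Type*} [Fintype V] [DecidableEq V] (G : SimpleGraph V)
    (A : Matrix V V ℂ) (hA : ThreeColored G A) (hdet : A.det ≠ 0)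
    (hpm : HasPM G)
    (hodd : ∀ (u : V) (c : G.Walk u u), c.IsCycle → Odd c.length →
      walkWeight A c ∈ ({Complex.I, -Complex.I} : Set ℂ)) :
    ∀ v : V, A⁻¹ v v = 0 := by
  classical
  intro v
  rw [Matrix.inv_def, Matrix.smul_apply, Matrix.adjugate_apply]
  set B := A.updateRow v (Pi.single v 1) with hB
  let good : Set (Equiv.Perm V) := {σ | σ v = v ∧ (oddSet σ).Nonempty}
  have hbad : ∀ σ, σ ∉ good → ∏ i, B (σ i) i = 0 := by
    intro σ hσ
    by_contra hne
    have hne' : ∀ i, B (σ i) i ≠ 0 := fun i => Finset.prod_ne_zero_iff.1 hne i (Finset.mem_univ i)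
    have hv : σ v = v := by
      have := hne' (σ⁻¹ v)
      rw [show σ (σ⁻¹ v) = v from σ.apply_symm_apply v, hB, Matrix.updateRow_self, Pi.single_apply] at this
      have h : σ⁻¹ v = v := by
        by_contra hc
        exact this (if_neg hc)
      rw [Equiv.Perm.inv_eq_iff_eq] at h
      exact h.symm
    refine hσ ⟨hv, exists_odd_cycle ?_⟩
    have hsupp : σ.support = Finset.univ.erase v := by
      ext y
      rw [Equiv.Perm.mem_support, Finset.mem_erase, and_iff_left (Finset.mem_univ _)]
      refine ⟨fun h hy => h (hy ▸ hv), fun hy hfix => hne' y ?_⟩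
      rw [hfix, hB, Matrix.updateRow_ne hy, hA.2.1]
    rw [hsupp, Finset.card_erase_of_mem (Finset.mem_univ v), Finset.card_univ]
    have hpos : 0 < Fintype.card V := Fintype.card_pos_iff.2 ⟨v⟩
    obtain ⟨k, hk⟩ := even_card_of_hasPM hpm
    exact ⟨k - 1, by omega⟩
  -- The cycle to reverse is selected from `oddSet σ` only, which the reversal preserves.
  let pick : Set V → V := fun s => if h : s.Nonempty then h.some else v
  let g : Equiv.Perm V → Equiv.Perm V := fun σ =>
    if σ ∈ good then flipCycle σ (pick (oddSet σ)) else σ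
  have hpick : ∀ σ ∈ good, pick (oddSet σ) ∈ oddSet σ := by
    intro σ hσ
    simp only [pick, dif_pos hσ.2]
    exact hσ.2.some_mem
  have hflip : ∀ σ ∈ good, ∀ x, flipCycle σ x ∈ good := by
    intro σ hσ x
    refine ⟨?_, by rw [oddSet_flipCycle]; exact hσ.2⟩
    have := support_flipCycle σ x
    rw [← Equiv.Perm.notMem_support, this, Equiv.Perm.notMem_support]
    exact hσ.1
  have hneg : ∀ σ, ((σ.sign : ℤ) : ℂ) * ∏ i, B (σ i) i +
      (((g σ).sign : ℤ) : ℂ) * ∏ i, B (g σ i) i = 0 := by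
    intro σ
    by_cases hσ : σ ∈ good
    · simp only [g, if_pos hσ]
      rw [sign_flipCycle, term_flipCycle hA hodd v σ _ (hpick σ hσ) hσ.1]
      ring
    · simp only [g, if_neg hσ, hbad σ hσ]
      simp
  rw [B.det_apply', Finset.sum_involution (fun σ _ => g σ) (fun σ _ => hneg σ) ?_
    (fun _ _ => Finset.mem_univ _) ?_, smul_zero]
  · intro σ _ hne heq
    have := hneg σ
    rw [heq] at this
    exact hne (self_eq_neg.1 (eq_neg_of_add_eq_zero_left this))
  · intro σ _
    by_cases hσ : σ ∈ good
    · simp only [g, if_pos hσ, if_pos (hflip σ hσ _), oddSet_flipCycle, flipCycle_flipCycle]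
    · simp only [g, if_neg hσ]
end

section
/- Let B be a finite bicyclic graph with a perfect matching, and let Γ be a cycle of B such that, relative to every perfect matching of B, Γ has at least three pegs. Then there is no path P in B that is vertex-disjoint from Γ and such that the induced subgraph of B on V(B) ∖ (V(P) ∪ V(Γ)) has a perfect matching. -/
/-!
Write `S` for the vertex set of `Γ`, and let `N` be a perfect matching of `B - (V(P) ∪ S)`.
Perfect matchings are handled as fixed-point-free involutions along edges (`PairsOn`). Since `B`
and `B - (V(P) ∪ S)` have perfect matchings, `|V(P)|` and `|S|` have the same parity.

If both are even, the paths `P` and `Γ` minus an edge have perfect matchings consisting of their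
own edges; together with `N` they form a perfect matching of `B` without pegs on `Γ`.

If both are odd, let `C` be the component of `B - S` containing `P`. Outside `P` it is matched by
`N`, so `|C|` is odd, and any perfect matching `M` of `B` has an odd number `k` of edges between
`C` and `S`. Deleting an edge of `Γ` and all but one of these `k` edges leaves `B` connected
(`card_cross_le_two`), so the edge count `n + 1` forces `k ≤ 2`, hence `k = 1`.
Let `z ∈ S` be the end of that edge. Then `M` on `C ∪ {z}`, `N` on `V ∖ (S ∪ C)`, and alternate
edges of the path `Γ - z` form a perfect matching of `B` with one peg on `Γ`.
-/

open SimpleGraph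

/-! ### Perfect matchings as involutions -/

/-- `f` encodes a perfect matching of the subgraph of `G` induced on `S`: on `S` it is an
involution that sends each vertex to a neighbour in `S`. Values off `S` are irrelevant. -/
def PairsOn {V : Type*} (G : SimpleGraph V) (S : Set V) (f : V → V) : Prop :=
  ∀ x ∈ S, f x ∈ S ∧ f (f x) = x ∧ G.Adj x (f x)

/-- The partner function of a perfect matching given as a set of edges. -/
lemma exists_pairs_of_isPM {V : Type*} [DecidableEq V] {G : SimpleGraph V}
    {M : Finset (Sym2 V)} (hM : IsPM G M) :
    ∃ f : V → V, ∀ x, f (f x) = x ∧ G.Adj x (f x) := by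
  have h1 : ∀ x, ∃ y, s(x, y) ∈ M := by
    intro x
    obtain ⟨e, he⟩ := Finset.card_eq_one.1 (hM.2 x)
    have : e ∈ M.filter (fun e => x ∈ e) := by simp [he]
    rw [Finset.mem_filter] at this
    obtain ⟨y, rfl⟩ := this.2
    exact ⟨y, this.1⟩
  choose f hf using h1
  refine ⟨f, fun x => ⟨?_, hM.1 _ (hf x)⟩⟩
  have h2 := Finset.card_le_one.1 (hM.2 (f x)).le s(f x, f (f x)) (by simp [hf])
    s(x, f x) (by simp [hf])
  rw [Sym2.eq_swap, Sym2.congr_left] at h2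
  exact h2

lemma exists_pairsOn_of_hasPM_induce {V : Type*} [DecidableEq V] {G : SimpleGraph V}
    {S : Set V} (h : HasPM (G.induce S)) : ∃ f, PairsOn G S f := by
  classical
  obtain ⟨M, hM⟩ := h
  obtain ⟨f, hf⟩ := exists_pairs_of_isPM hM
  refine ⟨fun x => if h : x ∈ S then f ⟨x, h⟩ else x, fun x hx => ?_⟩
  have := (hf ⟨x, hx⟩)
  simp only [hx, dif_pos, Subtype.coe_prop, this.1, true_and]
  exact this.2

/-- A fixed-point-free involution on a finite set forces even cardinality. -/
lemma PairsOn.even_card {V : Type*} {G : SimpleGraph V} {S : Finset V} {f : V → V}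
    (h : PairsOn G (S : Set V) f) : Even S.card := by
  have : ∑ x ∈ S, (1 : ZMod 2) = 0 :=
    Finset.sum_involution (fun x _ => f x) (fun _ _ => by decide)
      (fun x hx _ => (h x hx).2.2.ne') (fun x hx => (h x hx).1) (fun x hx => (h x hx).2.1)
  rw [Finset.sum_const, nsmul_eq_mul, mul_one] at this
  exact (ZMod.natCast_eq_zero_iff_even).1 this

/-- A partner function on all vertices yields a perfect matching, whose pegs on `Γ` come from the
vertices of `Γ` not matched along `Γ`. -/
lemma exists_isPM_pegCount_le {V : Type*} [Fintype V] [DecidableEq V] {G : SimpleGraph V}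
    {u : V} (Γ : G.Walk u u) {g : V → V} (hg : ∀ x, g (g x) = x ∧ G.Adj x (g x))
    (T : Finset V) (hT : ∀ x ∈ Γ.support, s(x, g x) ∉ Γ.edges → x ∈ T) :
    ∃ M, IsPM G M ∧ pegCount Γ M ≤ T.card := by
  refine ⟨Finset.univ.image fun x => s(x, g x), ⟨?_, ?_⟩, ?_⟩
  · intro e he
    obtain ⟨x, -, rfl⟩ := Finset.mem_image.1 he
    exact (hg x).2
  · intro v
    rw [Finset.card_eq_one]
    refine ⟨s(v, g v), ?_⟩
    ext e
    simp only [Finset.mem_filter, Finset.mem_image, Finset.mem_univ, true_and,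
      Finset.mem_singleton]
    constructor
    · rintro ⟨⟨x, rfl⟩, hv⟩
      rcases Sym2.mem_iff.1 hv with rfl | rfl
      · rfl
      · rw [(hg x).1, Sym2.eq_swap]
    · rintro rfl
      exact ⟨⟨v, rfl⟩, by simp⟩
  · have hsub : {e : Sym2 V | e ∈ (Finset.univ.image fun x => s(x, g x)) ∧ IsPeg Γ e} ⊆
        ((T.image fun x => s(x, g x) : Finset (Sym2 V)) : Set (Sym2 V)) := by
      rintro e ⟨he, x, y, rfl, hxy⟩
      obtain ⟨w, -, hw⟩ := Finset.mem_image.1 he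
      have hy : y = g x := by
        rcases Sym2.eq_iff.1 hw with ⟨rfl, rfl⟩ | ⟨rfl, rfl⟩
        · rfl
        · exact (hg _).1.symm
      subst hy
      have hx : x ∈ Γ.support := by rcases hxy with h | h <;> exact h.1
      refine Finset.mem_coe.2 (Finset.mem_image.2 ⟨x, hT x hx fun h => ?_, rfl⟩)
      rcases hxy with h' | h'
      · exact h'.2.2 h
      · exact h'.2 (Γ.snd_mem_support_of_mem_edges h)
    calc pegCount Γ _ ≤ _ := Set.ncard_le_ncard hsub (Finset.finite_toSet _)
      _ ≤ T.card := by rw [Set.ncard_coe_finset]; exact Finset.card_image_le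

/-! ### Matchings along paths and cycles -/

/-- A path with an even number of vertices is perfectly matched by its alternate edges. -/
lemma exists_pairs_of_odd_path {V : Type*} [DecidableEq V] {G : SimpleGraph V} :
    ∀ {a b : V} (p : G.Walk a b), p.IsPath → Odd p.length →
      ∃ f : V → V, ∀ x ∈ p.support, f x ∈ p.support ∧ f (f x) = x ∧ s(x, f x) ∈ p.edges
  | _, _, .nil, _, h => by simp at h
  | a, b, .cons _ .nil, _, _ => by
    refine ⟨Equiv.swap a b, fun x hx => ?_⟩
    simp only [Walk.support_cons, Walk.support_nil, List.mem_cons, List.not_mem_nil,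
      or_false] at hx
    rcases hx with rfl | rfl <;> simp [Sym2.eq_swap]
  | a, b, .cons (v := c) _ (.cons (v := d) _ q), hp, h => by
    have hq : Odd q.length := by
      simp only [Walk.length_cons] at h
      grind
    have hp' := hp
    simp only [Walk.cons_isPath_iff, Walk.support_cons, List.mem_cons, not_or] at hp'
    obtain ⟨⟨hqp, hc⟩, hac, ha⟩ := hp'
    obtain ⟨f, hf⟩ := exists_pairs_of_odd_path q hqp hq
    refine ⟨fun x => if x ∈ q.support then f x else Equiv.swap a c x, fun x hx => ?_⟩
    simp only [Walk.support_cons, List.mem_cons] at hx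
    by_cases hxq : x ∈ q.support
    · have := hf x hxq
      simp [hxq, this]
    · rcases hx with rfl | rfl | hx
      · simp [ha, hc]
      · simp [ha, hc, Sym2.eq_swap]
      · exact absurd hx hxq

/-- A path with an odd number of vertices, minus its first vertex, is perfectly matched by
alternate edges. -/
lemma exists_pairs_of_even_path {V : Type*} [DecidableEq V] {G : SimpleGraph V}
    {a b : V} (p : G.Walk a b) (hp : p.IsPath) (h : Even p.length) :
    ∃ f : V → V, ∀ x ∈ p.support, x ≠ a →
      f x ∈ p.support ∧ f x ≠ a ∧ f (f x) = x ∧ s(x, f x) ∈ p.edges := by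
  cases p with
  | nil => exact ⟨id, by simp⟩
  | cons hadj q =>
    rw [Walk.cons_isPath_iff] at hp
    rw [Walk.length_cons, Nat.even_add_one, Nat.not_even_iff_odd] at h
    obtain ⟨f, hf⟩ := exists_pairs_of_odd_path q hp.1 h
    refine ⟨f, fun x hx hxa => ?_⟩
    simp only [Walk.support_cons, List.mem_cons, hxa, false_or] at hx
    obtain ⟨h1, h2, h3⟩ := hf x hx
    exact ⟨by simp [h1], fun h => hp.2 (h ▸ h1), h2, by simp [h3]⟩

/-- A cycle through `z`, minus one of its edges at `z`, is a path starting at `z`. -/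
lemma exists_path_of_isCycle {V : Type*} [DecidableEq V] {G : SimpleGraph V} {u z : V}
    {Γ : G.Walk u u} (hΓ : Γ.IsCycle) (hz : z ∈ Γ.support) :
    ∃ (w : V) (p : G.Walk z w), p.IsPath ∧ (∀ x, x ∈ p.support ↔ x ∈ Γ.support) ∧
      (∀ e ∈ p.edges, e ∈ Γ.edges) ∧ s(z, w) ∈ Γ.edges ∧ s(z, w) ∉ p.edges := by
  have hc := hΓ.rotate hz
  have hs := fun x => Γ.mem_support_rotate_iff z hz (w := x)
  have he := fun e => (Γ.rotate_edges z hz).mem_iff (a := e)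
  generalize Γ.rotate z hz = Γ' at hc hs he
  cases Γ' with
  | nil => simp at hc
  | cons h q =>
    rw [Walk.cons_isCycle_iff] at hc
    refine ⟨_, q.reverse, hc.1.reverse, fun x => ?_, fun e h => ?_, ?_, ?_⟩
    · rw [← hs]
      simp only [Walk.support_reverse, List.mem_reverse, Walk.support_cons, List.mem_cons]
      constructor
      · exact Or.inr
      · rintro (rfl | h)
        · exact q.end_mem_support
        · exact h
    · rw [← he]
      simp only [Walk.edges_reverse, List.mem_reverse] at h
      simp [h]
    · rw [← he]
      simp
    · simpa using hc.2

/-! ### Edges between a component and the cycle -/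

/-- In a bicyclic graph, let `C` be a set of vertices off the cycle `Γ`, any two of which are
joined by a walk off `Γ`. Then edges `c — m c` from `C` to `Γ`, at most one for each `c ∈ C`, are
at most two in number: deleting all but one of them and an edge of `Γ` preserves connectedness. -/
lemma card_cross_le_two {V : Type*} [Fintype V] [DecidableEq V] {B : SimpleGraph V}
    (hB : Bicyclic V B) {u : V} {Γ : B.Walk u u} (hΓ : Γ.IsCycle) (C : Set V)
    (hC : ∀ x ∈ C, ∀ y ∈ C, ∃ w : B.Walk x y, ∀ v ∈ w.support, v ∉ Γ.support)
    (m : V → V) (K : Finset V)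
    (hK : ∀ c ∈ K, c ∈ C ∧ m c ∈ Γ.support ∧ B.Adj c (m c)) : K.card ≤ 2 := by
  rcases K.eq_empty_or_nonempty with rfl | ⟨c₀, hc₀⟩
  · simp
  have hCS : ∀ x ∈ C, x ∉ Γ.support := fun x hx => by
    obtain ⟨w, hw⟩ := hC x hx x hx
    exact hw x w.start_mem_support
  obtain ⟨w, p, -, hpS, -, he0, he0p⟩ := exists_path_of_isCycle hΓ Γ.start_mem_support
  set e₀ := s(u, w) with he₀
  have hwS : w ∈ Γ.support := Γ.snd_mem_support_of_mem_edges he0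
  set D' : Finset (Sym2 V) := (K.erase c₀).image fun c => s(c, m c) with hD'
  set D : Finset (Sym2 V) := insert e₀ D' with hD
  have hD'mem : ∀ x y, s(x, y) ∈ D' →
      (x ∈ C ∧ y ∈ Γ.support) ∨ (y ∈ C ∧ x ∈ Γ.support) := by
    intro x y h
    obtain ⟨c, hc, hcxy⟩ := Finset.mem_image.1 h
    have := hK c (Finset.mem_of_mem_erase hc)
    rcases Sym2.eq_iff.1 hcxy with ⟨rfl, rfl⟩ | ⟨rfl, rfl⟩
    · exact Or.inl ⟨this.1, this.2.1⟩
    · exact Or.inr ⟨this.1, this.2.1⟩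
  have he0D' : e₀ ∉ D' := fun h => by
    rcases hD'mem _ _ h with h | h
    · exact hCS _ h.1 Γ.start_mem_support
    · exact hCS _ h.1 hwS
  have hD'card : D'.card = K.card - 1 := by
    rw [hD', Finset.card_image_of_injOn, Finset.card_erase_of_mem hc₀]
    intro c hc d hd hcd
    have h1 := hK c (Finset.mem_of_mem_erase hc)
    have h2 := hK d (Finset.mem_of_mem_erase hd)
    rcases Sym2.eq_iff.1 hcd with h | h
    · exact h.1
    · exact absurd (h.1 ▸ h2.2.1) (hCS c h1.1)
  have hDcard : D.card = K.card := by
    rw [hD, Finset.card_insert_of_notMem he0D', hD'card]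
    have := Finset.card_pos.2 ⟨c₀, hc₀⟩
    omega
  have hDsub : (D : Set (Sym2 V)) ⊆ B.edgeSet := by
    intro e he
    rcases Finset.mem_insert.1 (Finset.mem_coe.1 he) with rfl | he
    · exact Γ.edges_subset_edgeSet he0
    · obtain ⟨c, hc, rfl⟩ := Finset.mem_image.1 he
      exact (hK c (Finset.mem_of_mem_erase hc)).2.2
  set B' := B.deleteEdges (D : Set (Sym2 V)) with hB'
  have hSS : ∀ x ∈ Γ.support, ∀ y ∈ Γ.support, B'.Reachable x y := by
    have hpD : ∀ e ∈ p.edges, e ∉ (D : Set (Sym2 V)) := by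
      intro e he heD
      rcases Finset.mem_insert.1 (Finset.mem_coe.1 heD) with rfl | h
      · exact he0p he
      · induction e with | _ x y =>
        have h1 := (hpS _).1 (p.fst_mem_support_of_mem_edges he)
        have h2 := (hpS _).1 (p.snd_mem_support_of_mem_edges he)
        rcases hD'mem _ _ h with h | h
        · exact hCS _ h.1 h1
        · exact hCS _ h.1 h2
    have hu : ∀ x ∈ Γ.support, B'.Reachable u x := by
      intro x hx
      have hx' := (hpS x).2 hx
      exact ⟨(p.takeUntil x hx').toDeleteEdges _
        fun e he => hpD e (p.edges_takeUntil_subset_edges hx' he)⟩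
    exact fun x hx y hy => (hu x hx).symm.trans (hu y hy)
  have hCC : ∀ x ∈ C, ∀ y ∈ C, B'.Reachable x y := by
    intro x hx y hy
    obtain ⟨q, hq⟩ := hC x hx y hy
    refine ⟨q.toDeleteEdges _ fun e he heD => ?_⟩
    induction e with | _ s t =>
    have h1 := hq _ (q.fst_mem_support_of_mem_edges he)
    have h2 := hq _ (q.snd_mem_support_of_mem_edges he)
    rcases Finset.mem_insert.1 (Finset.mem_coe.1 heD) with h | h
    · rcases Sym2.eq_iff.1 h with h | h
      · exact h2 (h.2 ▸ hwS)
      · exact h1 (h.1 ▸ hwS)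
    · rcases hD'mem _ _ h with h | h
      · exact h2 h.2
      · exact h1 h.2
  have hkey : ∀ x ∈ C, ∀ y ∈ Γ.support, B'.Reachable x y := by
    intro x hx y hy
    have h0 := hK c₀ hc₀
    refine (hCC x hx c₀ h0.1).trans (Reachable.trans ?_ (hSS _ h0.2.1 y hy))
    refine Adj.reachable ((deleteEdges_adj).2 ⟨h0.2.2, fun h => ?_⟩)
    rcases Finset.mem_insert.1 (Finset.mem_coe.1 h) with h | h
    · rcases Sym2.eq_iff.1 h with h | h
      · exact hCS _ h0.1 (h.1 ▸ Γ.start_mem_support)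
      · exact hCS _ h0.1 (h.1 ▸ hwS)
    · obtain ⟨c, hc, hcc⟩ := Finset.mem_image.1 h
      have h1 := hK c (Finset.mem_of_mem_erase hc)
      rcases Sym2.eq_iff.1 hcc with h | h
      · exact (Finset.ne_of_mem_erase hc) h.1
      · exact hCS c h1.1 (h.1 ▸ h0.2.1)
  have hadj : ∀ x y, B.Adj x y → B'.Reachable x y := by
    intro x y hxy
    by_cases h : s(x, y) ∈ D
    · rcases Finset.mem_insert.1 h with h | h
      · rcases Sym2.eq_iff.1 h with ⟨rfl, rfl⟩ | ⟨rfl, rfl⟩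
        · exact hSS _ Γ.start_mem_support _ hwS
        · exact hSS _ hwS _ Γ.start_mem_support
      · rcases hD'mem _ _ h with h | h
        · exact hkey _ h.1 _ h.2
        · exact (hkey _ h.1 _ h.2).symm
    · exact Adj.reachable ((deleteEdges_adj).2 ⟨hxy, h⟩)
  have hwalk : ∀ {x y : V}, B.Walk x y → B'.Reachable x y := by
    intro x y q
    induction q with
    | nil => exact Reachable.refl _
    | cons h _ ih => exact (hadj _ _ h).trans ih
  have hconn : B'.Connected :=
    { preconnected := fun x y => by
        obtain ⟨q⟩ := hB.1.preconnected x y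
        exact hwalk q
      nonempty := ⟨u⟩ }
  have hDle : K.card ≤ Fintype.card V + 1 := by
    rw [← hDcard, ← hB.2, ← Set.ncard_coe_finset]
    exact Set.ncard_le_ncard hDsub (Set.toFinite _)
  have hle := hconn.card_vert_le_card_edgeSet_add_one
  rw [Nat.card_eq_fintype_card, Nat.card_coe_set_eq, hB', edgeSet_deleteEdges,
    Set.ncard_sdiff hDsub (Finset.finite_toSet _), hB.2, Set.ncard_coe_finset, hDcard] at hle
  omega

/-! ### Perfect matchings with few pegs -/

/-- If `P` is a path off `Γ` on an odd number of vertices whose complement in `B - V(Γ)` is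
perfectly matched by `n`, `Γ` is odd, and `m` is a perfect matching of `B`, then some perfect matching of `B` has at most one peg
on `Γ`. -/
lemma exists_isPM_one_peg {V : Type*} [Fintype V] [DecidableEq V] {B : SimpleGraph V}
    (hB : Bicyclic V B) {m : V → V} (hm : ∀ x, m (m x) = x ∧ B.Adj x (m x))
    {u : V} {Γ : B.Walk u u} (hΓ : Γ.IsCycle) (hΓodd : Odd Γ.support.toFinset.card)
    {a b : V} (P : B.Walk a b) (hPodd : Odd P.support.toFinset.card)
    (hPΓ : ∀ x ∈ P.support, x ∉ Γ.support) {n : V → V}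
    (hn : PairsOn B {x : V | x ∉ P.support ∧ x ∉ Γ.support} n) :
    ∃ M, IsPM B M ∧ pegCount Γ M ≤ 1 := by
  classical
  -- The component of `B - V(Γ)` containing `P`.
  set C : Finset V :=
    Finset.univ.filter fun v => ∃ w : B.Walk a v, ∀ x ∈ w.support, x ∉ Γ.support with hCdef
  have memC : ∀ v, v ∈ C ↔ ∃ w : B.Walk a v, ∀ x ∈ w.support, x ∉ Γ.support := by
    simp [hCdef]
  have hCS : ∀ v ∈ C, v ∉ Γ.support := fun v hv => by
    obtain ⟨w, hw⟩ := (memC v).1 hv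
    exact hw v w.end_mem_support
  have hCadj : ∀ x ∈ C, ∀ y, B.Adj x y → y ∉ Γ.support → y ∈ C := by
    intro x hx y hxy hy
    obtain ⟨w, hw⟩ := (memC x).1 hx
    refine (memC y).2 ⟨w.concat hxy, fun v hv => ?_⟩
    rw [Walk.support_concat] at hv
    simp only [List.mem_append, List.mem_singleton] at hv
    rcases hv with hv | rfl
    · exact hw v hv
    · exact hy
  have hPC : ∀ x ∈ P.support, x ∈ C := fun x hx =>
    (memC x).2 ⟨P.takeUntil x hx, fun v hv => hPΓ v (P.support_takeUntil_subset_support hx hv)⟩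
  have hCodd : Odd C.card := by
    have h1 : Even (C \ P.support.toFinset).card := by
      refine PairsOn.even_card (G := B) (f := n) fun x hx => ?_
      simp only [Finset.coe_sdiff, Set.mem_sdiff, Finset.mem_coe, List.mem_toFinset] at hx ⊢
      obtain ⟨h1, h2, h3⟩ := hn x ⟨hx.2, hCS x hx.1⟩
      exact ⟨⟨hCadj x hx.1 _ h3 h1.2, h1.1⟩, h2, h3⟩
    have hsub : P.support.toFinset ⊆ C := fun x hx => hPC x (List.mem_toFinset.1 hx)
    rw [← Finset.card_sdiff_add_card_eq_card hsub]
    exact h1.add_odd hPodd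
  set K : Finset V := C.filter fun c => m c ∈ Γ.support with hK
  have hKodd : Odd K.card := by
    have h1 : Even (C.filter fun c => ¬ m c ∈ Γ.support).card := by
      refine PairsOn.even_card (G := B) (f := m) fun x hx => ?_
      simp only [Finset.coe_filter, Set.mem_ofPred_eq] at hx ⊢
      refine ⟨⟨hCadj x hx.1 _ (hm x).2 hx.2, ?_⟩, hm x⟩
      rw [(hm x).1]
      exact hCS x hx.1
    have h2 := Finset.card_filter_add_card_filter_not (s := C) fun c => m c ∈ Γ.support
    rw [← h2] at hCodd
    exact (Nat.odd_add.1 hCodd).2 h1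
  have hK2 : K.card ≤ 2 := by
    refine card_cross_le_two hB hΓ (C : Set V) (fun x hx y hy => ?_) m K fun c hc => ?_
    · obtain ⟨w, hw⟩ := (memC x).1 hx
      obtain ⟨w', hw'⟩ := (memC y).1 hy
      refine ⟨w.reverse.append w', fun v hv => ?_⟩
      rw [Walk.mem_support_append_iff, Walk.support_reverse, List.mem_reverse] at hv
      exact hv.elim (hw v) (hw' v)
    · rw [hK, Finset.mem_filter] at hc
      exact ⟨hc.1, hc.2, (hm c).2⟩
  have hK1 : K.card = 1 := by
    obtain ⟨j, hj⟩ := hKodd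
    omega
  obtain ⟨c₀, hc₀⟩ := Finset.card_eq_one.1 hK1
  have hKmem : ∀ c, (c ∈ C ∧ m c ∈ Γ.support) ↔ c = c₀ := fun c => by
    rw [← Finset.mem_singleton, ← hc₀]
    exact (Finset.mem_filter (s := C) (p := fun c => m c ∈ Γ.support)).symm
  obtain ⟨hc₀C, hzS⟩ := (hKmem c₀).2 rfl
  set z := m c₀ with hz
  have hmz : m z = c₀ := (hm c₀).1
  obtain ⟨w, p, hp, hpS, hpE, -, -⟩ := exists_path_of_isCycle hΓ hzS
  have hplen : Even p.length := by
    have h1 : p.support.toFinset = Γ.support.toFinset := by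
      ext x
      simp [hpS]
    rw [← h1, List.toFinset_card_of_nodup hp.support_nodup, Walk.length_support] at hΓodd
    grind
  obtain ⟨f, hf⟩ := exists_pairs_of_even_path p hp hplen
  simp only [hpS] at hf
  set g : V → V := fun x =>
    if x ∈ C ∨ x = z then m x else if x ∈ Γ.support then f x else n x with hg
  have g1 : ∀ x, x ∈ C ∨ x = z → g x = m x := fun x h => by simp only [hg, if_pos h]
  have g2 : ∀ x ∈ Γ.support, x ≠ z → g x = f x := fun x h h' => by
    have : ¬ (x ∈ C ∨ x = z) := fun h2 => h2.elim (fun h3 => hCS x h3 h) h'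
    simp only [hg, if_neg this, if_pos h]
  have g3 : ∀ x, x ∉ Γ.support → x ∉ C → g x = n x := fun x h h' => by
    have : ¬ (x ∈ C ∨ x = z) := fun h2 => h2.elim h' fun h3 => h (h3 ▸ hzS)
    simp only [hg, if_neg this, if_neg h]
  refine exists_isPM_pegCount_le Γ (g := g) (fun x => ?_) {z} (fun x hx hxe => ?_)
  · by_cases hx1 : x ∈ C ∨ x = z
    · have hmx : m x ∈ C ∨ m x = z := by
        rcases hx1 with hx | rfl
        · by_cases hmS : m x ∈ Γ.support
          · exact Or.inr (by rw [(hKmem x).1 ⟨hx, hmS⟩])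
          · exact Or.inl (hCadj x hx _ (hm x).2 hmS)
        · exact Or.inl (hmz ▸ hc₀C)
      rw [g1 x hx1, g1 _ hmx]
      exact hm x
    · rw [not_or] at hx1
      by_cases hxS : x ∈ Γ.support
      · obtain ⟨h1, h2, h3, h4⟩ := hf x hxS hx1.2
        rw [g2 x hxS hx1.2, g2 _ h1 h2]
        exact ⟨h3, p.adj_of_mem_edges h4⟩
      · obtain ⟨h1, h2, h3⟩ := hn x ⟨fun h => hx1.1 (hPC x h), hxS⟩
        rw [g3 x hxS hx1.1, g3 _ h1.2 fun h => hx1.1 (hCadj _ h x h3.symm hxS)]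
        exact ⟨h2, h3⟩
  · by_contra hxz
    rw [Finset.mem_singleton] at hxz
    rw [g2 x hx hxz] at hxe
    exact hxe (hpE _ (hf x hx hxz).2.2.2)

/-- If `P` and `Γ` have evenly many vertices, matching each along its own edges extends a perfect
matching of the rest to one of `B` without pegs on `Γ`. -/
lemma exists_isPM_no_peg {V : Type*} [Fintype V] [DecidableEq V] {B : SimpleGraph V}
    {u : V} {Γ : B.Walk u u} (hΓ : Γ.IsCycle) (hΓeven : Even Γ.support.toFinset.card)
    {a b : V} (P : B.Walk a b) (hP : P.IsPath) (hPeven : Even P.support.toFinset.card)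
    (hPΓ : ∀ x ∈ P.support, x ∉ Γ.support) {n : V → V}
    (hn : PairsOn B {x : V | x ∉ P.support ∧ x ∉ Γ.support} n) :
    ∃ M, IsPM B M ∧ pegCount Γ M ≤ 0 := by
  classical
  obtain ⟨w, p, hp, hpS, hpE, -, -⟩ := exists_path_of_isCycle hΓ Γ.start_mem_support
  have hplen : Odd p.length := by
    have h1 : p.support.toFinset = Γ.support.toFinset := by
      ext x
      simp [hpS]
    rw [← h1, List.toFinset_card_of_nodup hp.support_nodup, Walk.length_support] at hΓeven
    grind
  have hPlen : Odd P.length := by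
    rw [List.toFinset_card_of_nodup hP.support_nodup, Walk.length_support] at hPeven
    grind
  obtain ⟨f, hf⟩ := exists_pairs_of_odd_path p hp hplen
  obtain ⟨f', hf'⟩ := exists_pairs_of_odd_path P hP hPlen
  simp only [hpS] at hf
  set g : V → V := fun x =>
    if x ∈ Γ.support then f x else if x ∈ P.support then f' x else n x with hg
  have g1 : ∀ x ∈ Γ.support, g x = f x := fun x h => by simp only [hg, if_pos h]
  have g2 : ∀ x ∈ P.support, g x = f' x := fun x h => by
    simp only [hg, if_neg (hPΓ x h), if_pos h]
  have g3 : ∀ x, x ∉ Γ.support → x ∉ P.support → g x = n x := fun x h h' => by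
    simp only [hg, if_neg h, if_neg h']
  refine exists_isPM_pegCount_le Γ (g := g) (fun x => ?_) ∅ (fun x hx hxe => ?_)
  · by_cases hxS : x ∈ Γ.support
    · obtain ⟨h1, h2, h3⟩ := hf x hxS
      rw [g1 x hxS, g1 _ h1]
      exact ⟨h2, p.adj_of_mem_edges h3⟩
    · by_cases hxP : x ∈ P.support
      · obtain ⟨h1, h2, h3⟩ := hf' x hxP
        rw [g2 x hxP, g2 _ h1]
        exact ⟨h2, P.adj_of_mem_edges h3⟩
      · obtain ⟨h1, h2, h3⟩ := hn x ⟨hxP, hxS⟩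
        rw [g3 x hxS hxP, g3 _ h1.2 h1.1]
        exact ⟨h2, h3⟩
  · rw [g1 x hx] at hxe
    exact absurd (hpE _ (hf x hx).2.2) hxe

/-- If a cycle `Γ` of a bicyclic graph with a perfect matching has at
least three pegs relative to every perfect matching, then there is no path `P`
vertex-disjoint from `Γ` such that `B − (V(P) ∪ V(Γ))` has a perfect matching. -/
theorem stmt14 {V : Type*} [Fintype V] [DecidableEq V] (B : SimpleGraph V)
    (hB : Bicyclic V B) (hpm : HasPM B)
    {u : V} (Γ : B.Walk u u) (hΓ : Γ.IsCycle)
    (hpegs : ∀ M, IsPM B M → 3 ≤ pegCount Γ M) :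
    ¬ ∃ (a b : V) (P : B.Walk a b), P.IsPath ∧
        (∀ x ∈ P.support, x ∉ Γ.support) ∧
        HasPM (B.induce {x : V | x ∉ P.support ∧ x ∉ Γ.support}) := by
  classical
  rintro ⟨a, b, P, hP, hPΓ, hN⟩
  obtain ⟨M, hM⟩ := hpm
  obtain ⟨m, hm⟩ := exists_pairs_of_isPM hM
  obtain ⟨n, hn⟩ := exists_pairsOn_of_hasPM_induce hN
  have hparity : Even (P.support.toFinset.card + Γ.support.toFinset.card) := by
    have hV : Even (Finset.univ : Finset V).card :=
      PairsOn.even_card (G := B) (f := m) fun x _ => ⟨by simp, hm x⟩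
    have hW : Even (Finset.univ \ (P.support.toFinset ∪ Γ.support.toFinset)).card := by
      refine PairsOn.even_card (G := B) (f := n) ?_
      convert hn using 1
      ext x
      simp
    have hdisj : Disjoint P.support.toFinset Γ.support.toFinset :=
      Finset.disjoint_left.2 fun x hx hx' =>
        hPΓ x (List.mem_toFinset.1 hx) (List.mem_toFinset.1 hx')
    rw [← Finset.card_union_of_disjoint hdisj]
    rw [← Finset.card_sdiff_add_card_eq_card
      (Finset.subset_univ (P.support.toFinset ∪ Γ.support.toFinset))] at hV
    exact (Nat.even_add.1 hV).1 hW
  rcases Nat.even_or_odd P.support.toFinset.card with hPpar | hPpar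
  · obtain ⟨M', hM', hle⟩ :=
      exists_isPM_no_peg hΓ ((Nat.even_add.1 hparity).1 hPpar) P hP hPpar hPΓ hn
    have := hpegs M' hM'
    omega
  · have hΓodd : Odd Γ.support.toFinset.card := by
      rw [← Nat.not_even_iff_odd] at hPpar ⊢
      exact fun h => hPpar ((Nat.even_add.1 hparity).2 h)
    obtain ⟨M', hM', hle⟩ := exists_isPM_one_peg hB hm hΓ hΓodd P hPpar hPΓ hn
    have := hpegs M' hM'
    omega
end
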